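/- arXiv:1611.05314 — 12 statements merged into one kernel-verified Lean document; each statement's English description precedes it below -/
import Mathlib

section
/- Let P_1, …, P_m be nonempty compact subsets of ℝ^n and let L, L' be linear functionals on ℝ^n. For each i let A_i = {x ∈ P_i : ∀ y ∈ P_i, L(y) ≤ L(x)} and A_i' = {x ∈ P_i : ∀ y ∈ P_i, L'(y) ≤ L'(x)} be the sets of maximizers of L and L' over P_i. If A_1 + ⋯ + A_m = A_1' + ⋯ + A_m' as subsets of ℝ^n, then A_i = A_i' for every i. -/
open Pointwise

noncomputable section

/-- The simplex Δ_F ⊆ ℝ^n for F ⊆ {0,…,n−1}. -/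
def stdSimplexOn (n : ℕ) (F : Finset (Fin n)) : Set (Fin n → ℝ) :=
  {x | (∀ i, 0 ≤ x i) ∧ (∀ i, i ∉ F → x i = 0) ∧ ∑ i, x i = 1}

/-- The general permutahedron Π_{n−1}(k−1) ⊆ ℝ^n, Minkowski sum of all Δ_F with |F| = k. -/
def genPerm (n k : ℕ) : Set (Fin n → ℝ) :=
  ∑ F ∈ Finset.univ.powersetCard k, stdSimplexOn n F

/-- P_{n−1}(v): convex hull of the orbit of v under coordinate permutations. -/
def permPoly {n : ℕ} (v : Fin n → ℝ) : Set (Fin n → ℝ) :=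
  convexHull ℝ {w | ∃ σ : Equiv.Perm (Fin n), w = v ∘ σ}

/-- Dimension of a subset of ℝ^n : dimension of its affine span. -/
def setDim {n : ℕ} (S : Set (Fin n → ℝ)) : ℕ :=
  Module.finrank ℝ (affineSpan ℝ S).direction

/-- Nonempty exposed face of P : the maximizer set of some linear functional. -/
def IsExpFace {n : ℕ} (P A : Set (Fin n → ℝ)) : Prop :=
  A.Nonempty ∧ ∃ L : (Fin n → ℝ) →ₗ[ℝ] ℝ, A = {x ∈ P | ∀ y ∈ P, L y ≤ L x}

/-- Stirling numbers of the second kind. -/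
def stirling2 : ℕ → ℕ → ℕ
  | 0, 0 => 1
  | 0, _ + 1 => 0
  | _ + 1, 0 => 0
  | n + 1, k + 1 => (k + 1) * stirling2 n (k + 1) + stirling2 n k

/-- i-th backward difference of u at position k. -/
def bdiff {n : ℕ} (u : Fin n → ℝ) (i : ℕ) (k : Fin n) : ℝ :=
  ∑ j ∈ Finset.range (i + 1), (-1 : ℝ) ^ j * (i.choose j) *
    u ⟨(k : ℕ) - j, lt_of_le_of_lt (Nat.sub_le _ _) k.isLt⟩

/-- The number of chains A_1 ⊆ ⋯ ⊆ A_ℓ of nonempty exposed faces of P with dim A_i = s i. -/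
def flagCount {n : ℕ} (P : Set (Fin n → ℝ)) (l : ℕ) (s : Fin l → ℕ) : ℕ :=
  Nat.card {A : Fin l → Set (Fin n → ℝ) //
    (∀ i, IsExpFace P (A i) ∧ setDim (A i) = s i) ∧ ∀ i j, i ≤ j → A i ⊆ A j}

/-- The exponential (l+1)-flag polynomial of P ⊆ ℝ^n (a polytope of dimension n−1). -/
def xiFlag {n : ℕ} (P : Set (Fin n → ℝ)) (l : ℕ) (x : Fin (l + 1) → ℝ) : ℝ :=
  ∑ s : Fin (l + 1) → Fin n, if Monotone s then
    ((flagCount P (l + 1) (fun i => (s i : ℕ)) : ℝ) / (Nat.factorial (n - (s 0 : ℕ)))) *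
      ∏ i : Fin (l + 1), x i ^ (if (i : ℕ) = 0 then (s i : ℕ) else
        (s i : ℕ) - (s ⟨(i : ℕ) - 1, lt_of_le_of_lt (Nat.sub_le _ _) i.isLt⟩ : ℕ))
  else 0

/-- The standard permutahedron Π_{n−1} ⊆ ℝ^n. -/
def stdPermutahedron (n : ℕ) : Set (Fin n → ℝ) :=
  convexHull ℝ {w | ∃ σ : Equiv.Perm (Fin n), ∀ i, w i = ((σ i : ℕ) : ℝ) + 1}

/-- E_m(t) = ∑_{j=0}^m t^j/j!, the degree-m Taylor polynomial of exp. -/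
def Etaylor (m : ℕ) (t : ℝ) : ℝ :=
  ∑ j ∈ Finset.range (m + 1), t ^ j / (Nat.factorial j)

end
theorem maximizers_subset_aux (n m : ℕ) (P : Fin m → Set (Fin n → ℝ))
    (hne : ∀ i, (P i).Nonempty) (hcomp : ∀ i, IsCompact (P i))
    (L L' : (Fin n → ℝ) →ₗ[ℝ] ℝ)
    (h : (∑ i, {x ∈ P i | ∀ y ∈ P i, L y ≤ L x})
        = ∑ i, {x ∈ P i | ∀ y ∈ P i, L' y ≤ L' x}) (i : Fin m) :
    {x ∈ P i | ∀ y ∈ P i, L y ≤ L x} ⊆ {x ∈ P i | ∀ y ∈ P i, L' y ≤ L' x} := by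
  intro x hx
  have hL : Continuous L := L.continuous_of_finiteDimensional
  have hex : ∀ j, ∃ z, z ∈ {x ∈ P j | ∀ y ∈ P j, L y ≤ L x} := by
    intro j
    obtain ⟨z, hz, hm⟩ := (hcomp j).exists_isMaxOn (hne j) hL.continuousOn
    exact ⟨z, hz, fun y hy => hm hy⟩
  choose z hz using hex
  let w : Fin m → Fin n → ℝ := Function.update z i x
  have hwi : w i = x := Function.update_self i x z
  have hw : ∀ j, w j ∈ {x ∈ P j | ∀ y ∈ P j, L y ≤ L x} := by
    intro j
    by_cases hj : j = i
    · subst hj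
      rw [hwi]
      exact hx
    · have : w j = z j := Function.update_of_ne hj x z
      rw [this]
      exact hz j
  have hs : ∑ j, w j ∈ ∑ i, {x ∈ P i | ∀ y ∈ P i, L y ≤ L x} :=
    (Set.mem_fintype_sum _ _).2 ⟨w, hw, rfl⟩
  rw [h, Set.mem_fintype_sum] at hs
  obtain ⟨g, hg, hsum⟩ := hs
  have hle : ∀ j ∈ Finset.univ, L' (w j) ≤ L' (g j) := fun j _ => (hg j).2 _ (hw j).1
  have heq : ∑ j, L' (w j) = ∑ j, L' (g j) := by
    rw [← map_sum, ← map_sum, hsum]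
  have hi := (Finset.sum_eq_sum_iff_of_le hle).1 heq i (Finset.mem_univ i)
  rw [hwi] at hi
  exact ⟨hx.1, fun y hy => hi ▸ (hg i).2 y hy⟩

/-- the decomposition of a face of a Minkowski sum as a sum
of maximizer sets is unique. -/
theorem minkowski_face_decomposition_unique (n m : ℕ) (P : Fin m → Set (Fin n → ℝ))
    (hne : ∀ i, (P i).Nonempty) (hcomp : ∀ i, IsCompact (P i))
    (L L' : (Fin n → ℝ) →ₗ[ℝ] ℝ)
    (h : (∑ i, {x ∈ P i | ∀ y ∈ P i, L y ≤ L x})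
        = ∑ i, {x ∈ P i | ∀ y ∈ P i, L' y ≤ L' x}) :
    ∀ i, {x ∈ P i | ∀ y ∈ P i, L y ≤ L x} = {x ∈ P i | ∀ y ∈ P i, L' y ≤ L' x} := by
  intro i
  exact (maximizers_subset_aux n m P hne hcomp L L' h i).antisymm
    (maximizers_subset_aux n m P hne hcomp L' L h.symm i)
end

section
/- Let 2 ≤ k ≤ n. The set of extreme points of the general permutahedron Π_{n−1}(k−1) ⊆ ℝ^n is exactly {u ∈ ℝ^n : there is a permutation σ of {0,…,n−1} with u_j = C(σ(j), k−1) for all j}, where C(m, k−1) is the binomial coefficient (equal to 0 for m < k−1); in particular every vertex has exactly k−1 coordinates equal to 0 and one coordinate equal to each of C(k−1,k−1), C(k,k−1), …, C(n−1,k−1), and Π_{n−1}(k−1) has exactly n!/(k−1)! extreme points. -/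
open Pointwise

/-- The vertex attached to a permutation. -/
def gpVertex {n : ℕ} (r : ℕ) (σ : Equiv.Perm (Fin n)) : Fin n → ℝ :=
  fun j => (((σ j : ℕ).choose r : ℕ) : ℝ)

theorem gp_card_lt {n : ℕ} (σ : Equiv.Perm (Fin n)) (m : ℕ) (hm : m ≤ n) :
    (Finset.univ.filter (fun i => (σ i : ℕ) < m)).card = m := by
  have h : (Finset.univ.filter (fun i => (σ i : ℕ) < m)).card = (Finset.range m).card := by
    refine Finset.card_bij (fun i _ => (σ i : ℕ)) ?_ ?_ ?_
    · intro a ha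
      simpa using ha
    · intro a _ b _ hab
      exact σ.injective (Fin.ext hab)
    · intro b hb
      have hb' : b < m := by simpa using hb
      exact ⟨σ.symm ⟨b, by omega⟩, by simpa using hb', by simp⟩
  rw [h, Finset.card_range]

theorem gp_choose_lt {r a b : ℕ} (hr : 1 ≤ r) (hab : a < b) (hb : r ≤ b) :
    a.choose r < b.choose r := by
  obtain ⟨b, rfl⟩ : ∃ c, b = c + 1 := ⟨b - 1, by omega⟩
  obtain ⟨r, rfl⟩ : ∃ c, r = c + 1 := ⟨r - 1, by omega⟩
  have h1 : a.choose (r + 1) ≤ b.choose (r + 1) := Nat.choose_le_choose _ (by omega)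
  have h2 : 0 < b.choose r := Nat.choose_pos (by omega)
  rw [Nat.choose_succ_succ']
  omega

theorem gp_choose_inj {r a b : ℕ} (hr : 1 ≤ r) (hb : r ≤ b)
    (h : a.choose r = b.choose r) : a = b := by
  rcases lt_trichotomy a b with hlt | heq | hgt
  · have := gp_choose_lt hr hlt hb
    omega
  · exact heq
  · have := gp_choose_lt hr hgt (by omega)
    omega

theorem gp_argmax {n : ℕ} (r : ℕ) (σ : Equiv.Perm (Fin n)) (hn : r + 1 ≤ n) :
    ∃ m : Finset (Fin n) → Fin n, ∀ F ∈ Finset.univ.powersetCard (r + 1),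
      m F ∈ F ∧ ∀ i ∈ F, σ i ≤ σ (m F) := by
  have : ∀ F : Finset (Fin n), ∃ a : Fin n, F ∈ Finset.univ.powersetCard (r + 1) →
      a ∈ F ∧ ∀ i ∈ F, σ i ≤ σ a := by
    intro F
    by_cases hF : F ∈ Finset.univ.powersetCard (r + 1)
    · have hc := (Finset.mem_powersetCard.1 hF).2
      have hne : F.Nonempty := Finset.card_pos.1 (by omega)
      obtain ⟨a, ha, hmax⟩ := Finset.exists_max_image F σ hne
      exact ⟨a, fun _ => ⟨ha, hmax⟩⟩
    · exact ⟨⟨0, by omega⟩, fun h => absurd h hF⟩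
  choose m hm using this
  exact ⟨m, hm⟩

theorem gp_count {n : ℕ} (r : ℕ) (σ : Equiv.Perm (Fin n)) (m : Finset (Fin n) → Fin n)
    (hm : ∀ F ∈ Finset.univ.powersetCard (r + 1), m F ∈ F ∧ ∀ i ∈ F, σ i ≤ σ (m F))
    (j : Fin n) :
    ((Finset.univ.powersetCard (r + 1)).filter (fun F => m F = j)).card
      = (σ j : ℕ).choose r := by
  have hS := gp_card_lt σ (σ j : ℕ) (σ j).isLt.le
  rw [← hS, ← Finset.card_powersetCard]
  refine Finset.card_bij (fun F _ => F.erase j) ?_ ?_ ?_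
  · intro F hF
    obtain ⟨hF, hj⟩ := Finset.mem_filter.1 hF
    obtain ⟨h1, h2⟩ := hm F hF
    rw [hj] at h1 h2
    have hc := (Finset.mem_powersetCard.1 hF).2
    rw [Finset.mem_powersetCard]
    refine ⟨?_, by rw [Finset.card_erase_of_mem h1]; omega⟩
    intro i hi
    obtain ⟨hij, hiF⟩ := Finset.mem_erase.1 hi
    have h3 := h2 i hiF
    have h4 : σ i ≠ σ j := fun h => hij (σ.injective h)
    have h5 : σ i < σ j := lt_of_le_of_ne h3 h4
    simpa using h5
  · intro F hF G hG h
    obtain ⟨hF, hj⟩ := Finset.mem_filter.1 hF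
    obtain ⟨hG, hj'⟩ := Finset.mem_filter.1 hG
    have h1 := (hm F hF).1
    have h2 := (hm G hG).1
    rw [hj] at h1
    rw [hj'] at h2
    rw [← Finset.insert_erase h1, h, Finset.insert_erase h2]
  · intro G hG
    obtain ⟨hsub, hc⟩ := Finset.mem_powersetCard.1 hG
    have hlt : ∀ i ∈ G, σ i < σ j := fun i hi => by simpa using hsub hi
    have hjG : j ∉ G := fun h => lt_irrefl _ (hlt j h)
    have hmem : insert j G ∈ Finset.univ.powersetCard (r + 1) := by
      rw [Finset.mem_powersetCard]
      exact ⟨Finset.subset_univ _, by rw [Finset.card_insert_of_notMem hjG, hc]⟩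
    refine ⟨insert j G, ?_, Finset.erase_insert hjG⟩
    rw [Finset.mem_filter]
    refine ⟨hmem, ?_⟩
    obtain ⟨h1, h2⟩ := hm _ hmem
    rcases Finset.mem_insert.1 h1 with h | h
    · exact h
    · exact absurd (hlt _ h) (not_lt.2 (h2 j (Finset.mem_insert_self _ _)))

theorem gp_vertex_eq {n : ℕ} (r : ℕ) (σ : Equiv.Perm (Fin n)) (m : Finset (Fin n) → Fin n)
    (hm : ∀ F ∈ Finset.univ.powersetCard (r + 1), m F ∈ F ∧ ∀ i ∈ F, σ i ≤ σ (m F)) :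
    ∑ F ∈ Finset.univ.powersetCard (r + 1), (Pi.single (m F) (1 : ℝ) : Fin n → ℝ)
      = gpVertex r σ := by
  funext j
  rw [Finset.sum_apply, gpVertex, ← gp_count r σ m hm j, Finset.card_filter]
  push_cast
  refine Finset.sum_congr rfl fun F _ => ?_
  simp [Pi.single_apply, eq_comm]

theorem gp_mem_iff {n k : ℕ} (x : Fin n → ℝ) :
    x ∈ genPerm n k ↔ ∃ g : Finset (Fin n) → (Fin n → ℝ),
      (∀ F ∈ Finset.univ.powersetCard k, g F ∈ stdSimplexOn n F) ∧
      ∑ F ∈ Finset.univ.powersetCard k, g F = x := by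
  rw [genPerm, Set.mem_finsetSum]
  constructor
  · rintro ⟨g, hg, h⟩
    exact ⟨g, fun F hF => hg hF, h⟩
  · rintro ⟨g, hg, h⟩
    exact ⟨g, fun {F} hF => hg F hF, h⟩

theorem gp_vertex_mem {n : ℕ} (r : ℕ) (hn : r + 1 ≤ n) (σ : Equiv.Perm (Fin n)) :
    gpVertex r σ ∈ genPerm n (r + 1) := by
  obtain ⟨m, hm⟩ := gp_argmax r σ hn
  rw [gp_mem_iff]
  refine ⟨fun F => Pi.single (m F) 1, fun F hF => ⟨fun i => ?_, fun i hi => ?_, ?_⟩,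
    gp_vertex_eq r σ m hm⟩
  · by_cases h : i = m F
    · subst h; simp
    · simp [Pi.single_apply, h]
  · have h : i ≠ m F := fun h => hi (h ▸ (hm F hF).1)
    simp [Pi.single_apply, h]
  · simp

theorem gp_simplex_sub {n : ℕ} (F : Finset (Fin n)) (w y : Fin n → ℝ) (a : Fin n)
    (hy : y ∈ stdSimplexOn n F) :
    w a - ∑ i, w i * y i = ∑ i, (w a - w i) * y i := by
  simp only [sub_mul, Finset.sum_sub_distrib]
  rw [← Finset.mul_sum, hy.2.2, mul_one]

theorem gp_simplex_nonneg {n : ℕ} (F : Finset (Fin n)) (w y : Fin n → ℝ) (a : Fin n)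
    (hy : y ∈ stdSimplexOn n F) (hw : ∀ i ∈ F, w i ≤ w a) (i : Fin n) :
    0 ≤ (w a - w i) * y i := by
  by_cases hi : i ∈ F
  · exact mul_nonneg (sub_nonneg.2 (hw i hi)) (hy.1 i)
  · rw [hy.2.1 i hi, mul_zero]

theorem gp_simplex_le {n : ℕ} (F : Finset (Fin n)) (w y : Fin n → ℝ) (a : Fin n)
    (hy : y ∈ stdSimplexOn n F) (hw : ∀ i ∈ F, w i ≤ w a) :
    ∑ i, w i * y i ≤ w a := by
  rw [← sub_nonneg, gp_simplex_sub F w y a hy]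
  exact Finset.sum_nonneg fun i _ => gp_simplex_nonneg F w y a hy hw i

theorem gp_simplex_eq {n : ℕ} (F : Finset (Fin n)) (w y : Fin n → ℝ) (a : Fin n)
    (hy : y ∈ stdSimplexOn n F) (hw : ∀ i ∈ F, w i ≤ w a) (hinj : Function.Injective w)
    (h : ∑ i, w i * y i = w a) : y = Pi.single a 1 := by
  have h0 : ∑ i, (w a - w i) * y i = 0 := by
    rw [← gp_simplex_sub F w y a hy, h, sub_self]
  rw [Finset.sum_eq_zero_iff_of_nonneg
    (fun i _ => gp_simplex_nonneg F w y a hy hw i)] at h0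
  have hz : ∀ i, i ≠ a → y i = 0 := by
    intro i hi
    rcases mul_eq_zero.1 (h0 i (Finset.mem_univ _)) with h1 | h1
    · exact absurd (hinj (sub_eq_zero.1 h1)).symm hi
    · exact h1
  have ha : y a = 1 := by
    rw [← hy.2.2, Finset.sum_eq_single a (fun i _ hi => hz i hi) (by simp)]
  funext i
  by_cases hi : i = a
  · subst hi; simp [ha]
  · simp [hi, hz i hi]

theorem gp_lin_sum {n : ℕ} (S : Finset (Finset (Fin n))) (g : Finset (Fin n) → (Fin n → ℝ))
    (w : Fin n → ℝ) :
    ∑ i, w i * (∑ F ∈ S, g F) i = ∑ F ∈ S, ∑ i, w i * g F i := by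
  simp only [Finset.sum_apply, Finset.mul_sum]
  exact Finset.sum_comm

theorem gp_lin_le {n : ℕ} (r : ℕ) (hn : r + 1 ≤ n) (σ : Equiv.Perm (Fin n)) (w : Fin n → ℝ)
    (hw : ∀ i j, σ i ≤ σ j → w i ≤ w j) (x : Fin n → ℝ) (hx : x ∈ genPerm n (r + 1)) :
    ∑ i, w i * x i ≤ ∑ i, w i * gpVertex r σ i := by
  obtain ⟨m, hm⟩ := gp_argmax r σ hn
  obtain ⟨g, hg, rfl⟩ := (gp_mem_iff x).1 hx
  rw [← gp_vertex_eq r σ m hm, gp_lin_sum, gp_lin_sum]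
  refine Finset.sum_le_sum fun F hF => ?_
  have := gp_simplex_le F w (g F) (m F) (hg F hF) (fun i hi => hw _ _ ((hm F hF).2 i hi))
  simpa [Pi.single_apply] using this

theorem gp_lin_eq {n : ℕ} (r : ℕ) (hn : r + 1 ≤ n) (σ : Equiv.Perm (Fin n)) (w : Fin n → ℝ)
    (hw : ∀ i j, σ i ≤ σ j → w i ≤ w j) (hinj : Function.Injective w)
    (x : Fin n → ℝ) (hx : x ∈ genPerm n (r + 1))
    (h : ∑ i, w i * x i = ∑ i, w i * gpVertex r σ i) : x = gpVertex r σ := by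
  obtain ⟨m, hm⟩ := gp_argmax r σ hn
  obtain ⟨g, hg, rfl⟩ := (gp_mem_iff x).1 hx
  have hle : ∀ F ∈ Finset.univ.powersetCard (r + 1), ∑ i, w i * g F i
      ≤ ∑ i, w i * (Pi.single (m F) (1 : ℝ) : Fin n → ℝ) i := by
    intro F hF
    have := gp_simplex_le F w (g F) (m F) (hg F hF) (fun i hi => hw _ _ ((hm F hF).2 i hi))
    simpa [Pi.single_apply] using this
  rw [← gp_vertex_eq r σ m hm] at h ⊢
  rw [gp_lin_sum, gp_lin_sum, Finset.sum_eq_sum_iff_of_le hle] at h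
  refine Finset.sum_congr rfl fun F hF => ?_
  refine gp_simplex_eq F w (g F) (m F) (hg F hF) (fun i hi => hw _ _ ((hm F hF).2 i hi)) hinj ?_
  have := h F hF
  simpa [Pi.single_apply] using this

theorem gp_convex (n k : ℕ) : Convex ℝ (genPerm n k) := by
  rw [genPerm]
  refine Finset.sum_induction _ (fun s => Convex ℝ s) (fun s t hs ht => hs.add ht)
    (convex_singleton (𝕜 := ℝ) (0 : Fin n → ℝ)) fun F _ => ?_
  intro x hx y hy a b ha hb hab
  refine ⟨fun i => ?_, fun i hi => ?_, ?_⟩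
  · have := hx.1 i
    have := hy.1 i
    simp only [Pi.add_apply, Pi.smul_apply, smul_eq_mul]
    positivity
  · simp [hx.2.1 i hi, hy.2.1 i hi]
  · simp only [Pi.add_apply, Pi.smul_apply, smul_eq_mul, Finset.sum_add_distrib,
      ← Finset.mul_sum, hx.2.2, hy.2.2]
    linarith

theorem gp_hull {n : ℕ} (r : ℕ) (hn : r + 1 ≤ n) :
    genPerm n (r + 1) = convexHull ℝ (Set.range (gpVertex (n := n) r)) := by
  apply Set.Subset.antisymm
  · intro x hx
    by_contra hxn
    obtain ⟨f, u, h1, h2⟩ := geometric_hahn_banach_closed_point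
      (convex_convexHull ℝ (Set.range (gpVertex (n := n) r)))
      ((Set.finite_range (gpVertex (n := n) r)).isClosed_convexHull ℝ) hxn
    set w : Fin n → ℝ := fun i => f (Pi.single i 1) with hwdef
    have hf : ∀ y : Fin n → ℝ, f y = ∑ i, w i * y i := by
      intro y
      conv_lhs => rw [pi_eq_sum_univ' y]
      rw [map_sum]
      refine Finset.sum_congr rfl fun i _ => ?_
      rw [map_smul, smul_eq_mul, mul_comm, hwdef]
    have hw : ∀ i j, (Tuple.sort w).symm i ≤ (Tuple.sort w).symm j → w i ≤ w j := by
      intro i j hij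
      have := Tuple.monotone_sort w hij
      simpa using this
    have h3 := gp_lin_le r hn (Tuple.sort w).symm w hw x hx
    have h4 := h1 _ (subset_convexHull ℝ _ (Set.mem_range_self (Tuple.sort w).symm))
    rw [← hf, ← hf] at h3
    linarith
  · refine convexHull_min ?_ (gp_convex n (r + 1))
    rintro _ ⟨σ, rfl⟩
    exact gp_vertex_mem r hn σ

theorem gp_extreme {n : ℕ} (r : ℕ) (hn : r + 1 ≤ n) :
    Set.extremePoints ℝ (genPerm n (r + 1)) = Set.range (gpVertex (n := n) r) := by
  apply Set.Subset.antisymm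
  · rw [gp_hull r hn]
    exact extremePoints_convexHull_subset
  · rintro _ ⟨σ, rfl⟩
    rw [mem_extremePoints]
    refine ⟨gp_vertex_mem r hn σ, ?_⟩
    intro x hx y hy hxy
    obtain ⟨a, b, ha, hb, hab, h⟩ := hxy
    set w : Fin n → ℝ := fun i => ((σ i : ℕ) : ℝ) with hwdef
    have hw : ∀ i j, σ i ≤ σ j → w i ≤ w j := by
      intro i j hij
      simpa [hwdef] using hij
    have hinj : Function.Injective w := by
      intro i j hij
      apply σ.injective
      apply Fin.ext
      simpa [hwdef, Fin.ext_iff] using hij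
    have hx1 := gp_lin_le r hn σ w hw x hx
    have hy1 := gp_lin_le r hn σ w hw y hy
    have hs : ∑ i, w i * gpVertex r σ i = a * ∑ i, w i * x i + b * ∑ i, w i * y i := by
      rw [← h, Finset.mul_sum, Finset.mul_sum, ← Finset.sum_add_distrib]
      refine Finset.sum_congr rfl fun i _ => ?_
      simp only [Pi.add_apply, Pi.smul_apply, smul_eq_mul]
      ring
    set V := ∑ i, w i * gpVertex r σ i
    set X := ∑ i, w i * x i
    set Y := ∑ i, w i * y i
    have e1 : a * (V - X) + b * (V - Y) = 0 := by
      linear_combination V * hab + hs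
    have p1 : 0 ≤ a * (V - X) := mul_nonneg ha.le (by linarith)
    have p2 : 0 ≤ b * (V - Y) := mul_nonneg hb.le (by linarith)
    have q1 : a * (V - X) = 0 := by linarith
    have q2 : b * (V - Y) = 0 := by linarith
    have r1 : X = V := by
      rcases mul_eq_zero.1 q1 with h | h <;> linarith
    have r2 : Y = V := by
      rcases mul_eq_zero.1 q2 with h | h <;> linarith
    exact ⟨gp_lin_eq r hn σ w hw hinj x hx r1, gp_lin_eq r hn σ w hw hinj y hy r2⟩

theorem gp_extend {n : ℕ} (r : ℕ) (e : Fin (n - r) ↪ Fin n) :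
    ∃ σ : Equiv.Perm (Fin n), ∀ i, (σ (e i) : ℕ) = i + r := by
  classical
  obtain ⟨g, hg⟩ := Set.MapsTo.exists_equiv_extend_of_card_eq (α := Fin n) (β := Fin n)
    (t := Finset.univ) (by simp) (s := {i | r ≤ (i : ℕ)})
    (f := fun i => if h : r ≤ (i : ℕ) then e ⟨i - r, by omega⟩ else i)
    (fun i _ => by simp) (by
      intro i hi j hj hij
      have hi' : r ≤ (i : ℕ) := hi
      have hj' : r ≤ (j : ℕ) := hj
      simp only [hi', hj', dif_pos] at hij
      have := e.injective hij
      simp only [Fin.mk.injEq] at this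
      apply Fin.ext
      omega)
  let g' : Equiv.Perm (Fin n) :=
    g.trans (Equiv.subtypeUnivEquiv (fun x => Finset.mem_univ x))
  refine ⟨g'.symm, fun i => ?_⟩
  have h1 := hg ⟨i + r, by omega⟩ (by simp)
  have h2 : g' ⟨i + r, by omega⟩ = e i := by
    change ((g ⟨i + r, by omega⟩ : _) : Fin n) = e i
    rw [h1]
    simp
  rw [← h2]
  simp

theorem gp_card {n : ℕ} (r : ℕ) (hr : 1 ≤ r) (hn : r + 1 ≤ n) :
    Nat.card (Set.range (gpVertex (n := n) r)) = Nat.factorial n / Nat.factorial r := by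
  choose s hs using fun e : Fin (n - r) ↪ Fin n => gp_extend r e
  have hb : Function.Bijective (fun e : Fin (n - r) ↪ Fin n =>
      (⟨gpVertex r (s e), Set.mem_range_self _⟩ : Set.range (gpVertex (n := n) r))) := by
    constructor
    · intro e e' h
      have h' : gpVertex r (s e) = gpVertex r (s e') := congrArg Subtype.val h
      ext i
      have h1 := congrFun h' (e i)
      simp only [gpVertex, Nat.cast_inj, hs e i] at h1
      have h2 := gp_choose_inj hr (by omega) h1.symm
      rw [← hs e' i] at h2
      exact congrArg Fin.val ((s e').injective (Fin.ext h2))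
    · rintro ⟨_, τ, rfl⟩
      let e : Fin (n - r) ↪ Fin n :=
        ⟨fun i => τ.symm ⟨i + r, by omega⟩, by
          intro i j hij
          have := τ.symm.injective hij
          simp only [Fin.mk.injEq] at this
          apply Fin.ext
          omega⟩
      have he : ∀ i, (τ (e i) : ℕ) = i + r := fun i => by
        change ((τ (τ.symm ⟨i + r, by omega⟩) : Fin n) : ℕ) = i + r
        simp
      refine ⟨e, Subtype.ext ?_⟩
      funext j
      simp only [gpVertex, Nat.cast_inj]
      by_cases hj : r ≤ (τ j : ℕ)
      · have h1 : j = e ⟨τ j - r, by omega⟩ := by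
          apply τ.injective
          apply Fin.ext
          rw [he]
          simp only
          omega
        have h2 := hs e ⟨τ j - r, by omega⟩
        rw [← h1] at h2
        simp only at h2
        congr 1
        omega
      · have h2 : ¬ r ≤ (s e j : ℕ) := by
          intro hc
          have h1 : j = e ⟨s e j - r, by omega⟩ := by
            apply (s e).injective
            apply Fin.ext
            rw [hs]
            simp only
            omega
          have h3 := he ⟨s e j - r, by omega⟩
          rw [← h1] at h3
          omega
        rw [Nat.choose_eq_zero_of_lt (by omega), Nat.choose_eq_zero_of_lt (by omega)]
  rw [← Nat.card_congr (Equiv.ofBijective _ hb), Nat.card_eq_fintype_card,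
    Fintype.card_embedding_eq, Fintype.card_fin, Fintype.card_fin,
    Nat.descFactorial_eq_div (Nat.sub_le _ _)]
  congr 2
  omega

/-- the extreme points (vertices) of the general permutahedron
Π_{n−1}(k−1) are exactly the coordinate permutations of
(C(0,k−1), C(1,k−1), …, C(n−1,k−1)); each has exactly k−1 zero coordinates and
one coordinate equal to each of C(k−1,k−1), …, C(n−1,k−1), and there are
exactly n!/(k−1)! of them. -/
theorem extremePoints_genPerm (n k : ℕ) (hk : 2 ≤ k) (hkn : k ≤ n) :
    (Set.extremePoints ℝ (genPerm n k)
      = {u : Fin n → ℝ | ∃ σ : Equiv.Perm (Fin n),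
          ∀ j, u j = (((σ j : ℕ).choose (k - 1) : ℕ) : ℝ)}) ∧
    (∀ u ∈ Set.extremePoints ℝ (genPerm n k),
      (Finset.univ.filter (fun j => u j = 0)).card = k - 1 ∧
      ∀ m : ℕ, k - 1 ≤ m → m ≤ n - 1 → ∃! j : Fin n, u j = ((m.choose (k - 1) : ℕ) : ℝ)) ∧
    Nat.card (Set.extremePoints ℝ (genPerm n k)) = Nat.factorial n / Nat.factorial (k - 1) := by
  obtain ⟨r, rfl⟩ : ∃ r, k = r + 1 := ⟨k - 1, by omega⟩
  have hr : 1 ≤ r := by omega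
  simp only [Nat.add_sub_cancel]
  have hE := gp_extreme r hkn
  refine ⟨?_, ?_, ?_⟩
  · rw [hE]
    ext u
    constructor
    · rintro ⟨σ, rfl⟩
      exact ⟨σ, fun j => rfl⟩
    · rintro ⟨σ, h⟩
      exact ⟨σ, funext fun j => (h j).symm⟩
  · rw [hE]
    rintro _ ⟨σ, rfl⟩
    constructor
    · rw [← gp_card_lt σ r (by omega)]
      congr 1
      ext j
      simp [gpVertex, Nat.choose_eq_zero_iff, gp_card_lt σ r (by omega)]
    · intro m hm1 hm2
      refine ⟨σ.symm ⟨m, by omega⟩, by simp [gpVertex], ?_⟩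
      intro j hj
      simp only [gpVertex, Nat.cast_inj] at hj
      have := gp_choose_inj hr hm1 hj
      rw [Equiv.eq_symm_apply]
      exact Fin.ext this
  · rw [hE]
    exact gp_card r hr hkn
end

section
/- Let 2 ≤ k ≤ n. The general permutahedron Π_{n−1}(k−1) ⊆ ℝ^n has exactly (n−1)·n!/(2·(k−1)!) nonempty exposed faces of dimension 1 (edges), and every extreme point of Π_{n−1}(k−1) lies in exactly n−1 of these edges; thus Π_{n−1}(k−1) is a simple polytope of dimension n−1. -/
open Pointwise

/-- Coordinates of the vertices. -/
def wv (n m : ℕ) : Fin n → ℝ := fun j => ((j : ℕ).choose m : ℝ)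

/-- the permutation σ sorts c -/
def Sorts {n : ℕ} (c : Fin n → ℝ) (σ : Equiv.Perm (Fin n)) : Prop :=
  ∀ i j, σ i ≤ σ j → c i ≤ c j

lemma wv_zero {n m : ℕ} {i : Fin n} (h : (i : ℕ) < m) : wv n m i = 0 := by
  simp [wv, Nat.choose_eq_zero_of_lt h]

lemma wv_lt {n m : ℕ} (hm : 1 ≤ m) {i j : Fin n} (hij : i < j) (hj : m ≤ (j : ℕ)) :
    wv n m i < wv n m j := by
  unfold wv
  have hij' : (i : ℕ) < j := hij
  have : (i : ℕ).choose m < (j : ℕ).choose m := by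
    obtain ⟨j, hj'⟩ := j
    obtain ⟨i, hi'⟩ := i
    change i < j at hij'
    change m ≤ j at hj
    change i.choose m < j.choose m
    obtain ⟨q, rfl⟩ : ∃ q, j = q + 1 := ⟨j - 1, by omega⟩
    obtain ⟨m, rfl⟩ : ∃ p, m = p + 1 := ⟨m - 1, by omega⟩
    rw [Nat.choose_succ_succ]
    have h1 := Nat.choose_le_choose (m + 1) (show i ≤ q by omega)
    have h2 : 0 < q.choose m := Nat.choose_pos (by omega)
    simp only [Nat.succ_eq_add_one]
    omega
  exact_mod_cast this

lemma wv_mono (n m : ℕ) : Monotone (wv n m) := by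
  intro i j h
  unfold wv
  exact_mod_cast Nat.choose_le_choose m h

lemma wv_eq {n m : ℕ} (hm : 1 ≤ m) {i j : Fin n} (h : wv n m i = wv n m j) :
    i = j ∨ ((i : ℕ) < m ∧ (j : ℕ) < m) := by
  by_contra hc
  push Not at hc
  obtain ⟨hne, hc⟩ := hc
  rcases lt_or_gt_of_ne hne with h1 | h1
  · have : (i : ℕ) < j := h1
    by_cases hj : m ≤ (j : ℕ)
    · exact absurd h (wv_lt hm h1 hj).ne
    · have := hc (by omega)
      omega
  · have : (j : ℕ) < i := h1
    by_cases hj : m ≤ (i : ℕ)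
    · exact absurd h (wv_lt hm h1 hj).ne'
    · have := hc (by omega)
      omega

/-- the vertex for a ranking -/
def vtx (n m : ℕ) (σ : Equiv.Perm (Fin n)) : Fin n → ℝ := fun i => wv n m (σ i)

lemma exists_top (n m : ℕ) (hmn : m < n) (σ : Equiv.Perm (Fin n)) :
    ∃ t : Finset (Fin n) → Fin n,
      (∀ F : Finset (Fin n), F.card = m + 1 → t F ∈ F ∧ ∀ j ∈ F, σ j ≤ σ (t F)) ∧
      ∑ F ∈ Finset.univ.powersetCard (m + 1), Pi.single (t F) (1 : ℝ) = vtx n m σ := by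
  have h : ∀ F : Finset (Fin n), ∃ t : Fin n, F.card = m + 1 → t ∈ F ∧ ∀ j ∈ F, σ j ≤ σ t := by
    intro F
    by_cases hF : F.card = m + 1
    · have hne : F.Nonempty := by rw [← Finset.card_pos]; omega
      obtain ⟨t, ht, h2⟩ := F.exists_max_image σ hne
      exact ⟨t, fun _ => ⟨ht, h2⟩⟩
    · exact ⟨⟨m, hmn⟩, fun h => absurd h hF⟩
  choose t ht using h
  refine ⟨t, ht, ?_⟩
  funext i
  rw [Finset.sum_apply]
  simp only [Pi.single_apply, Finset.sum_boole, vtx, wv]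
  congr 1
  have hcard : (Finset.univ.filter (fun j => σ j < σ i)).card = (σ i : ℕ) := by
    rw [← Fin.card_Iio (σ i)]
    apply Finset.card_bij (fun j _ => σ j)
    · intro a ha; simpa using ha
    · intro a _ b _ hab; exact σ.injective hab
    · intro b hb; exact ⟨σ.symm b, by simpa using hb, by simp⟩
  rw [← hcard, ← Finset.card_powersetCard]
  refine Finset.card_bij' (fun F _ => F.erase i) (fun G _ => insert i G) ?_ ?_ ?_ ?_
  · intro F hF
    simp only [Finset.mem_filter, Finset.mem_powersetCard, Finset.subset_univ, true_and] at hF ⊢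
    obtain ⟨hF, hi⟩ := hF
    obtain ⟨h1, h2⟩ := ht F hF
    rw [← hi] at h1 h2
    refine ⟨?_, by rw [Finset.card_erase_of_mem h1, hF]; rfl⟩
    intro j hj
    rw [Finset.mem_erase] at hj
    simp only [Finset.mem_filter, Finset.mem_univ, true_and]
    exact lt_of_le_of_ne (h2 j hj.2) (fun h => hj.1 (σ.injective h))
  · intro G hG
    simp only [Finset.mem_filter, Finset.mem_powersetCard, Finset.subset_univ, true_and] at hG ⊢
    obtain ⟨h1, h2⟩ := hG
    have hi : i ∉ G := fun h => by simpa using h1 h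
    have hc : (insert i G).card = m + 1 := by rw [Finset.card_insert_of_notMem hi, h2]
    refine ⟨hc, ?_⟩
    obtain ⟨h3, h4⟩ := ht _ hc
    have h5 := h4 i (Finset.mem_insert_self _ _)
    rcases Finset.mem_insert.1 h3 with h | h
    · exact h.symm
    · have := h1 h
      simp only [Finset.mem_filter, Finset.mem_univ, true_and] at this
      exact absurd this (not_lt.2 h5)
  · intro F hF
    simp only [Finset.mem_filter, Finset.mem_powersetCard, Finset.subset_univ, true_and] at hF
    apply Finset.insert_erase
    rw [hF.2]; exact (ht F hF.1).1
  · intro G hG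
    simp only [Finset.mem_powersetCard] at hG
    apply Finset.erase_insert
    intro h
    simpa using hG.1 h

lemma vtx_mem (n m : ℕ) (hmn : m < n) (σ : Equiv.Perm (Fin n)) :
    vtx n m σ ∈ genPerm n (m + 1) := by
  obtain ⟨t, ht, hs⟩ := exists_top n m hmn σ
  rw [← hs]
  apply Set.finsetSum_mem_finsetSum
  intro F hF
  have hF' : F.card = m + 1 := (Finset.mem_powersetCard.1 hF).2
  refine ⟨fun i => ?_, fun i hi => ?_, by simp⟩
  · rw [Pi.single_apply]; split_ifs <;> norm_num
  · rw [Pi.single_apply, if_neg]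
    rintro rfl
    exact hi (ht F hF').1

lemma vtx_max (n m : ℕ) (hmn : m < n) (σ : Equiv.Perm (Fin n)) (c : Fin n → ℝ)
    (hc : Sorts c σ) (x : Fin n → ℝ) (hx : x ∈ genPerm n (m + 1)) :
    ∑ i, c i * x i ≤ ∑ i, c i * vtx n m σ i := by
  obtain ⟨t, ht, hs⟩ := exists_top n m hmn σ
  rw [← hs]
  unfold genPerm at hx
  obtain ⟨g, hg, rfl⟩ := (Set.mem_finsetSum _ _ _).1 hx
  simp only [Finset.sum_apply, Finset.mul_sum]
  rw [Finset.sum_comm, Finset.sum_comm (s := Finset.univ) (t := Finset.univ.powersetCard (m + 1))]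
  apply Finset.sum_le_sum
  intro F hF
  have hF' : F.card = m + 1 := (Finset.mem_powersetCard.1 hF).2
  obtain ⟨h1, h2, h3⟩ := hg hF
  calc ∑ i, c i * g F i ≤ ∑ i, c (t F) * g F i := by
        apply Finset.sum_le_sum
        intro i _
        by_cases hi : i ∈ F
        · exact mul_le_mul_of_nonneg_right (hc _ _ ((ht F hF').2 i hi)) (h1 i)
        · rw [h2 i hi]; simp
    _ = c (t F) := by rw [← Finset.mul_sum, h3, mul_one]
    _ = _ := by simp [Pi.single_apply]

lemma exists_sorts' {n m : ℕ} (c : Fin n → ℝ) (τ : Equiv.Perm (Fin n))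
    (h : Monovary c (vtx n m τ)) : ∃ σ, Sorts c σ ∧ vtx n m σ = vtx n m τ := by
  set f : Fin n → ℝ ×ₗ ℝ := fun i => toLex (c i, vtx n m τ i) with hf
  set s := Tuple.sort f
  have hs : Monotone (f ∘ s) := Tuple.monotone_sort f
  refine ⟨s.symm, ?_, ?_⟩
  · intro i j hij
    have := hs hij
    simp only [Function.comp, Equiv.apply_symm_apply, hf, Prod.Lex.toLex_le_toLex] at this
    rcases this with h | h
    · exact h.le
    · exact h.1.le
  · have h1 : Monotone (wv n m ∘ (τ * s : Equiv.Perm (Fin n))) := by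
      intro p q hpq
      have := hs hpq
      simp only [Function.comp, hf, Prod.Lex.toLex_le_toLex] at this
      rcases this with h' | h'
      · by_contra hlt
        push Not at hlt
        exact absurd (h hlt) (not_le.2 h')
      · exact h'.2
    have h2 : Monotone (wv n m ∘ (1 : Equiv.Perm (Fin n))) := wv_mono n m
    have h3 := Tuple.unique_monotone h1 h2
    funext i
    have := congrFun h3 (s.symm i)
    simp only [Function.comp, Equiv.Perm.mul_apply, Equiv.apply_symm_apply,
      Equiv.Perm.one_apply] at this
    exact this.symm

lemma exists_sorts {n : ℕ} (c : Fin n → ℝ) : ∃ σ, Sorts c σ := by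
  refine ⟨(Tuple.sort c).symm, ?_⟩
  intro i j hij
  simpa using Tuple.monotone_sort c hij

lemma sorts_monovary {n : ℕ} (m : ℕ) {c : Fin n → ℝ} {σ : Equiv.Perm (Fin n)} (h : Sorts c σ) :
    Monovary c (vtx n m σ) := by
  intro i j hij
  apply h
  by_contra hc
  push Not at hc
  exact absurd hij (not_lt.2 (wv_mono n m hc.le))

lemma exists_sorts_of_max {n m : ℕ} (c : Fin n → ℝ) (τ σ : Equiv.Perm (Fin n))
    (hσ : Sorts c σ) (h : ∑ i, c i * vtx n m τ i = ∑ i, c i * vtx n m σ i) :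
    ∃ σ, Sorts c σ ∧ vtx n m σ = vtx n m τ := by
  apply exists_sorts'
  have h1 := (sorts_monovary m hσ).sum_mul_comp_perm_eq_sum_mul_iff (σ := σ⁻¹ * τ)
  have h2 : (vtx n m σ) ∘ (σ⁻¹ * τ : Equiv.Perm (Fin n)) = vtx n m τ := by
    funext i; simp [vtx]
  rw [h2] at h1
  apply h1.1
  rw [← h]
  simp [vtx]

/-- vertex set -/
def VV (n m : ℕ) : Set (Fin n → ℝ) := Set.range (vtx n m)

lemma genPerm_eq (n m : ℕ) (hmn : m < n) : genPerm n (m + 1) = convexHull ℝ (VV n m) := by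
  have hconv : Convex ℝ (genPerm n (m + 1)) := by
    unfold genPerm
    apply Finset.sum_induction _ (fun s => Convex ℝ s)
    · intro a b ha hb; exact ha.add hb
    · exact convex_singleton 0
    · intro F _ x hx y hy a b ha hb hab
      refine ⟨fun i => ?_, fun i hi => ?_, ?_⟩
      · have := hx.1 i
        have := hy.1 i
        simp only [Pi.add_apply, Pi.smul_apply, smul_eq_mul]
        positivity
      · simp [hx.2.1 i hi, hy.2.1 i hi]
      · simp only [Pi.add_apply, Pi.smul_apply, smul_eq_mul, Finset.sum_add_distrib,
          ← Finset.mul_sum, hx.2.2, hy.2.2]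
        linarith
  apply Set.Subset.antisymm
  · intro x hx
    by_contra hn
    obtain ⟨f, u, h1, h2⟩ := geometric_hahn_banach_closed_point (convex_convexHull ℝ (VV n m))
      ((Set.finite_range (vtx n m)).isClosed_convexHull ℝ) hn
    obtain ⟨σ, hσ⟩ := exists_sorts (fun i => f (fun j => if i = j then 1 else 0))
    have h3 := vtx_max n m hmn σ _ hσ x hx
    have h4 := h1 (vtx n m σ) (subset_convexHull _ _ ⟨σ, rfl⟩)
    have e1 := LinearMap.pi_apply_eq_sum_univ f.toLinearMap x
    have e2 := LinearMap.pi_apply_eq_sum_univ f.toLinearMap (vtx n m σ)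
    simp only [ContinuousLinearMap.coe_coe, smul_eq_mul] at e1 e2
    rw [e1] at h2
    rw [e2] at h4
    simp only [mul_comm] at h2 h3 h4
    linarith
  · apply convexHull_min _ hconv
    rintro _ ⟨σ, rfl⟩
    exact vtx_mem n m hmn σ

/-- face by coefficient vector -/
def faceC {n : ℕ} (P : Set (Fin n → ℝ)) (c : Fin n → ℝ) : Set (Fin n → ℝ) :=
  {x ∈ P | ∀ y ∈ P, ∑ i, c i * y i ≤ ∑ i, c i * x i}

lemma isExpFace_iff {n : ℕ} (P A : Set (Fin n → ℝ)) :
    IsExpFace P A ↔ A.Nonempty ∧ ∃ c, A = faceC P c := by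
  unfold IsExpFace faceC
  constructor
  · rintro ⟨h, L, rfl⟩
    refine ⟨h, fun i => L (fun j => if i = j then 1 else 0), ?_⟩
    have : ∀ x, ∑ i, L (fun j => if i = j then 1 else 0) * x i = L x := by
      intro x
      rw [LinearMap.pi_apply_eq_sum_univ L x]
      simp [mul_comm]
    simp only [this]
  · rintro ⟨h, c, rfl⟩
    refine ⟨h, ∑ i, c i • LinearMap.proj i, ?_⟩
    simp

lemma faceC_eq (n m : ℕ) (hmn : m < n) (c : Fin n → ℝ) :
    faceC (genPerm n (m + 1)) c = convexHull ℝ {x | ∃ σ, Sorts c σ ∧ x = vtx n m σ} := by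
  set S := {x | ∃ σ, Sorts c σ ∧ x = vtx n m σ} with hS
  obtain ⟨σ₀, hσ₀⟩ := exists_sorts c
  set M := ∑ i, c i * vtx n m σ₀ i with hM
  have hlin : ∀ (a b : ℝ) (x y : Fin n → ℝ), ∑ i, c i * (a • x + b • y) i =
      a * ∑ i, c i * x i + b * ∑ i, c i * y i := by
    intro a b x y
    rw [Finset.mul_sum, Finset.mul_sum, ← Finset.sum_add_distrib]
    apply Finset.sum_congr rfl
    intro i _
    simp only [Pi.add_apply, Pi.smul_apply, smul_eq_mul]
    ring
  apply Set.Subset.antisymm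
  · rintro x ⟨hx, hx2⟩
    have hQ : convexHull ℝ (VV n m) ⊆
        {x | ∑ i, c i * x i ≤ M ∧ (∑ i, c i * x i = M → x ∈ convexHull ℝ S)} := by
      apply convexHull_min
      · rintro _ ⟨τ, rfl⟩
        refine ⟨vtx_max n m hmn σ₀ c hσ₀ _ (vtx_mem n m hmn τ), fun h => ?_⟩
        obtain ⟨σ, h1, h2⟩ := exists_sorts_of_max c τ σ₀ hσ₀ h
        exact subset_convexHull _ _ ⟨σ, h1, h2.symm⟩
      · intro x hx y hy a b ha hb hab
        simp only [Set.mem_ofPred_eq, hlin] at hx hy ⊢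
        have h1 := mul_le_mul_of_nonneg_left hx.1 ha
        have h2 := mul_le_mul_of_nonneg_left hy.1 hb
        have h3 : a * M + b * M = M := by rw [← add_mul, hab, one_mul]
        refine ⟨by linarith, fun h => ?_⟩
        rcases ha.eq_or_lt with rfl | ha'
        · have : b = 1 := by linarith
          subst this
          simp only [zero_mul, one_mul, zero_add, zero_smul, one_smul] at h ⊢
          exact hy.2 h
        rcases hb.eq_or_lt with rfl | hb'
        · have : a = 1 := by linarith
          subst this
          simp only [zero_mul, one_mul, add_zero, zero_smul, one_smul] at h ⊢
          exact hx.2 h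
        have e1 : a * ∑ i, c i * x i = a * M := by linarith
        have e2 : b * ∑ i, c i * y i = b * M := by linarith
        exact convex_convexHull ℝ S (hx.2 (mul_left_cancel₀ ha'.ne' e1))
          (hy.2 (mul_left_cancel₀ hb'.ne' e2)) ha hb hab
    have h1 := hQ (by rw [← genPerm_eq n m hmn]; exact hx)
    exact h1.2 (le_antisymm h1.1 (hx2 _ (vtx_mem n m hmn σ₀)))
  · apply convexHull_min
    · rintro _ ⟨σ, hσ, rfl⟩
      exact ⟨vtx_mem n m hmn σ, vtx_max n m hmn σ c hσ⟩
    · intro x hx y hy a b ha hb hab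
      refine ⟨?_, fun z hz => ?_⟩
      · rw [genPerm_eq n m hmn] at *
        exact convex_convexHull ℝ _ hx.1 hy.1 ha hb hab
      · rw [hlin]
        have h1 := mul_le_mul_of_nonneg_left (hx.2 z hz) ha
        have h2 := mul_le_mul_of_nonneg_left (hy.2 z hz) hb
        have h3 : ∀ t : ℝ, a * t + b * t = t := fun t => by rw [← add_mul, hab, one_mul]
        linarith [h3 (∑ i, c i * z i)]

lemma sorts_unique {n : ℕ} {c : Fin n → ℝ} {σ τ : Equiv.Perm (Fin n)} (h1 : Sorts c σ)
    (h2 : Sorts c τ) (j : Fin n) : c (σ.symm j) = c (τ.symm j) := by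
  have h1' : Monotone (c ∘ σ.symm) := fun a b h => h1 _ _ (by simpa using h)
  have h2' : Monotone (c ∘ τ.symm) := fun a b h => h2 _ _ (by simpa using h)
  exact congrFun (Tuple.unique_monotone h1' h2') j

lemma sorts_swap {n : ℕ} {c : Fin n → ℝ} {σ : Equiv.Perm (Fin n)} (h1 : Sorts c σ)
    {q p : Fin n} (h : c (σ.symm q) = c (σ.symm p)) : Sorts c (Equiv.swap q p * σ) := by
  have key : ∀ i, c i = c (σ.symm (Equiv.swap q p (σ i))) := by
    intro i
    rw [Equiv.swap_apply_def]
    split_ifs with h2 h3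
    · rw [← h, ← h2]; simp
    · rw [h, ← h3]; simp
    · simp
  intro i j hij
  rw [key i, key j]
  apply h1
  simpa using hij

lemma vtx_extreme {n m : ℕ} (hmn : m < n) (σ : Equiv.Perm (Fin n)) :
    vtx n m σ ∈ Set.extremePoints ℝ (genPerm n (m + 1)) := by
  set c : Fin n → ℝ := fun i => ((σ i : ℕ) : ℝ) with hc
  have hs : Sorts c σ := by
    intro i j h
    simp only [hc]
    exact_mod_cast h
  have hf := faceC_eq n m hmn c
  have hset : {x | ∃ τ, Sorts c τ ∧ x = vtx n m τ} = {vtx n m σ} := by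
    ext x
    simp only [Set.mem_ofPred_eq, Set.mem_singleton_iff]
    constructor
    · rintro ⟨τ, hτ, rfl⟩
      congr 1
      ext i
      have := sorts_unique hs hτ (τ i)
      simp only [hc, Equiv.apply_symm_apply, Equiv.symm_apply_apply] at this
      exact_mod_cast this
    · rintro rfl
      exact ⟨σ, hs, rfl⟩
  rw [hset, convexHull_singleton] at hf
  rw [mem_extremePoints_iff_left]
  refine ⟨vtx_mem n m hmn σ, ?_⟩
  rintro x hx y hy ⟨a, b, ha, hb, hab, hxy⟩
  have hx1 := vtx_max n m hmn σ c hs x hx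
  have hy1 := vtx_max n m hmn σ c hs y hy
  set M := ∑ i, c i * vtx n m σ i with hM
  have hlin : M = a * ∑ i, c i * x i + b * ∑ i, c i * y i := by
    rw [hM, ← hxy, Finset.mul_sum, Finset.mul_sum, ← Finset.sum_add_distrib]
    apply Finset.sum_congr rfl
    intro i _
    simp only [Pi.add_apply, Pi.smul_apply, smul_eq_mul]
    ring
  have h3 : a * M + b * M = M := by rw [← add_mul, hab, one_mul]
  have h4 := mul_le_mul_of_nonneg_left hx1 ha.le
  have h5 := mul_le_mul_of_nonneg_left hy1 hb.le
  have h6 : ∑ i, c i * x i = M := mul_left_cancel₀ ha.ne' (by linarith)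
  have : x ∈ faceC (genPerm n (m + 1)) c := by
    refine ⟨hx, fun z hz => ?_⟩
    rw [h6]
    exact vtx_max n m hmn σ c hs z hz
  rw [hf] at this
  exact this

/-- combinatorial description of edges -/
def IsE (n m : ℕ) (A : Set (Fin n → ℝ)) : Prop :=
  ∃ (σ : Equiv.Perm (Fin n)) (q p : Fin n), (q : ℕ) + 1 = p ∧ m ≤ (p : ℕ) ∧
    A = segment ℝ (vtx n m σ) (vtx n m (Equiv.swap q p * σ))

lemma vtx_ne {n m : ℕ} (hm : 1 ≤ m) (σ : Equiv.Perm (Fin n)) {q p : Fin n}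
    (hqp : (q : ℕ) < p) (hp : m ≤ (p : ℕ)) :
    vtx n m σ ≠ vtx n m (Equiv.swap q p * σ) := by
  intro h
  have := congrFun h (σ.symm p)
  simp only [vtx, Equiv.apply_symm_apply, Equiv.Perm.mul_apply, Equiv.swap_apply_right] at this
  exact absurd this (wv_lt hm hqp hp).ne'

lemma setDim_segment {n : ℕ} {a b : Fin n → ℝ} (h : a ≠ b) : setDim (segment ℝ a b) = 1 := by
  unfold setDim
  rw [← convexHull_pair, affineSpan_convexHull, direction_affineSpan, vectorSpan_pair_rev]
  exact finrank_span_singleton (by simpa [sub_eq_zero] using h.symm)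

lemma setDim_singleton {n : ℕ} (a : Fin n → ℝ) : setDim ({a} : Set (Fin n → ℝ)) = 0 := by
  unfold setDim
  rw [direction_affineSpan, vectorSpan_singleton]
  simp

lemma isE_face {n m : ℕ} (hmn : m < n) (hm : 1 ≤ m) {A : Set (Fin n → ℝ)} (hA : IsE n m A) :
    IsExpFace (genPerm n (m + 1)) A ∧ setDim A = 1 := by
  obtain ⟨σ, q, p, hqp, hp, rfl⟩ := hA
  refine ⟨?_, setDim_segment (vtx_ne hm σ (by omega) hp)⟩
  rw [isExpFace_iff]
  refine ⟨⟨_, left_mem_segment _ _ _⟩, ?_⟩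
  set g : Fin n → Fin n := fun j => if j = p then q else j with hg
  have hgm : Monotone g := by
    intro a b hab
    simp only [hg]
    have : (a : ℕ) ≤ b := hab
    rw [Fin.le_def]
    split_ifs with h1 h2 h2
    · rfl
    · subst h1
      omega
    · subst h2
      have : (a : ℕ) ≠ b := fun h => h1 (Fin.ext h)
      omega
    · exact hab
  set c : Fin n → ℝ := fun i => ((g (σ i) : ℕ) : ℝ) with hc
  have hs : Sorts c σ := by
    intro i j h
    simp only [hc]
    exact_mod_cast hgm h
  have hqpne : q ≠ p := by intro h; subst h; omega
  have hs2 : Sorts c (Equiv.swap q p * σ) := by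
    apply sorts_swap hs
    simp [hc, hg, hqpne]
  refine ⟨c, ?_⟩
  rw [faceC_eq n m hmn, ← convexHull_pair]
  congr 1
  ext x
  simp only [Set.mem_insert_iff, Set.mem_singleton_iff, Set.mem_ofPred_eq]
  constructor
  · rintro (rfl | rfl)
    · exact ⟨_, hs, rfl⟩
    · exact ⟨_, hs2, rfl⟩
  · rintro ⟨τ, hτ, rfl⟩
    have key : ∀ i, g (σ i) = g (τ i) := by
      intro i
      have := sorts_unique hs hτ (τ i)
      simp only [hc, Equiv.apply_symm_apply, Equiv.symm_apply_apply] at this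
      have h2 : ((g (τ i) : ℕ)) = g (σ i) := by exact_mod_cast this
      exact (Fin.ext h2).symm
    have hfix : ∀ i, σ i ≠ p → σ i ≠ q → τ i = σ i := by
      intro i h1 h2
      have := key i
      simp only [hg, h1, if_false] at this
      split_ifs at this with h3
      · exact absurd this h2
      · exact this.symm
    have hpq : ∀ i, σ i = p ∨ σ i = q → τ i = p ∨ τ i = q := by
      intro i h1
      have := key i
      simp only [hg] at this
      split_ifs at this with h3 h4 h4
      · exact Or.inl h4
      · exact Or.inr this.symm
      · exact Or.inl h4
      · rcases h1 with h1 | h1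
        · exact absurd h1 h3
        · exact Or.inr (by rw [← this, h1])
    have hinj : τ (σ.symm p) ≠ τ (σ.symm q) := by
      intro h
      have := σ.symm.injective (τ.injective h)
      exact hqpne this.symm
    have e1 := hpq (σ.symm p) (by simp)
    have e2 := hpq (σ.symm q) (by simp)
    rcases e1 with e1 | e1
    · left
      congr 1
      apply Equiv.ext
      intro i
      by_cases h1 : σ i = p
      · have : i = σ.symm p := by rw [← h1]; simp
        rw [h1, this, e1]
      by_cases h2 : σ i = q
      · have : i = σ.symm q := by rw [← h2]; simp
        rw [h2, this]
        rcases e2 with e2 | e2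
        · exact absurd (e1.trans e2.symm) hinj
        · exact e2
      exact hfix i h1 h2
    · right
      congr 1
      apply Equiv.ext
      intro i
      rw [Equiv.Perm.mul_apply]
      by_cases h1 : σ i = p
      · have : i = σ.symm p := by rw [← h1]; simp
        rw [h1, this, e1, Equiv.swap_apply_right]
      by_cases h2 : σ i = q
      · have : i = σ.symm q := by rw [← h2]; simp
        rw [h2, this, Equiv.swap_apply_left]
        rcases e2 with e2 | e2
        · exact e2
        · exact absurd (e1.trans e2.symm) hinj
      rw [hfix i h1 h2, Equiv.swap_apply_of_ne_of_ne h2 h1]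

lemma eq_segment {n : ℕ} {P A : Set (Fin n → ℝ)} (hAP : A ⊆ P) (hA : Convex ℝ A)
    {a b : Fin n → ℝ} (ha : a ∈ A) (hb : b ∈ A) (hab : a ≠ b)
    (ea : a ∈ Set.extremePoints ℝ P) (eb : b ∈ Set.extremePoints ℝ P)
    (hd : setDim A = 1) : A = segment ℝ a b := by
  apply Set.Subset.antisymm _ (hA.segment_subset ha hb)
  intro x hx
  unfold setDim at hd
  have hba : b - a ∈ (affineSpan ℝ A).direction :=
    AffineSubspace.vsub_mem_direction (subset_affineSpan _ _ hb) (subset_affineSpan _ _ ha)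
  have hxa : x - a ∈ (affineSpan ℝ A).direction :=
    AffineSubspace.vsub_mem_direction (subset_affineSpan _ _ hx) (subset_affineSpan _ _ ha)
  have hne : (⟨b - a, hba⟩ : (affineSpan ℝ A).direction) ≠ 0 := by
    intro h
    have := congrArg Subtype.val h
    simp only [ZeroMemClass.coe_zero, sub_eq_zero] at this
    exact hab this.symm
  obtain ⟨t, ht⟩ := (finrank_eq_one_iff_of_nonzero' _ hne).1 hd ⟨x - a, hxa⟩
  have ht' : t • (b - a) = x - a := congrArg Subtype.val ht
  have hxt : x = a + t • (b - a) := by rw [ht']; simp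
  rw [mem_extremePoints] at ea eb
  by_cases h0 : t < 0
  · exfalso
    have := ea.2 x (hAP hx) b (hAP hb) ⟨1 / (1 - t), -t / (1 - t), by
      apply div_pos <;> linarith, by apply div_pos <;> linarith, by
      have : 1 - t ≠ 0 := by linarith
      field_simp; ring, by
      have : 1 - t ≠ 0 := by linarith
      rw [hxt]
      ext i
      simp only [Pi.add_apply, Pi.smul_apply, smul_eq_mul, Pi.sub_apply]
      field_simp
      ring⟩
    exact hab this.2.symm
  by_cases h1 : 1 < t
  · exfalso
    have := eb.2 a (hAP ha) x (hAP hx) ⟨(t - 1) / t, 1 / t, by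
      apply div_pos <;> linarith, by apply div_pos <;> linarith, by
      have : t ≠ 0 := by linarith
      field_simp; ring, by
      have : t ≠ 0 := by linarith
      rw [hxt]
      ext i
      simp only [Pi.add_apply, Pi.smul_apply, smul_eq_mul, Pi.sub_apply]
      field_simp
      ring⟩
    exact hab this.1
  · push Not at h0 h1
    refine ⟨1 - t, t, by linarith, h0, by ring, ?_⟩
    rw [hxt]
    ext i
    simp only [Pi.add_apply, Pi.smul_apply, smul_eq_mul, Pi.sub_apply]
    ring

lemma face_isE {n m : ℕ} (hmn : m < n) (hm : 1 ≤ m) {A : Set (Fin n → ℝ)}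
    (hA : IsExpFace (genPerm n (m + 1)) A) (hd : setDim A = 1) : IsE n m A := by
  rw [isExpFace_iff] at hA
  obtain ⟨-, c, hc⟩ := hA
  have hc2 := hc
  rw [faceC_eq n m hmn] at hc2
  obtain ⟨σ, hσ⟩ := exists_sorts c
  by_cases h : ∃ q p : Fin n, (q : ℕ) + 1 = p ∧ m ≤ (p : ℕ) ∧ c (σ.symm q) = c (σ.symm p)
  · obtain ⟨q, p, hqp, hp, hcc⟩ := h
    refine ⟨σ, q, p, hqp, hp, ?_⟩
    apply eq_segment (P := genPerm n (m + 1)) _ _ _ _ (vtx_ne hm σ (by omega) hp)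
      (vtx_extreme hmn _) (vtx_extreme hmn _) hd
    · rw [hc]; exact fun x hx => hx.1
    · rw [hc2]; exact convex_convexHull _ _
    · rw [hc2]; exact subset_convexHull _ _ ⟨_, hσ, rfl⟩
    · rw [hc2]; exact subset_convexHull _ _ ⟨_, sorts_swap hσ hcc, rfl⟩
  · exfalso
    push Not at h
    have hmono : Monotone (c ∘ σ.symm) := fun a b h => hσ _ _ (by simpa using h)
    have hlt : ∀ i p : Fin n, i < p → m ≤ (p : ℕ) → c (σ.symm i) < c (σ.symm p) := by
      intro i p hip hp
      have hip' : (i : ℕ) < p := hip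
      set q : Fin n := ⟨(p : ℕ) - 1, by omega⟩ with hq
      have h1 : c (σ.symm i) ≤ c (σ.symm q) := hmono (by
        rw [Fin.le_def]; simp only [hq]; omega)
      have h2 : c (σ.symm q) ≤ c (σ.symm p) := hmono (by
        rw [Fin.le_def]; simp only [hq]; omega)
      have h3 := h q p (by simp only [hq]; omega) hp
      exact lt_of_le_of_lt h1 (lt_of_le_of_ne h2 h3)
    have hset : {x | ∃ τ, Sorts c τ ∧ x = vtx n m τ} = {vtx n m σ} := by
      ext x
      simp only [Set.mem_ofPred_eq, Set.mem_singleton_iff]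
      constructor
      · rintro ⟨τ, hτ, rfl⟩
        funext i
        simp only [vtx]
        have key := sorts_unique hσ hτ (τ i)
        have key2 : c (σ.symm (τ i)) = c (σ.symm (σ i)) := by rw [key]; simp
        rcases lt_trichotomy (τ i) (σ i) with h1 | h1 | h1
        · by_cases h2 : m ≤ (σ i : ℕ)
          · exact absurd key2 (hlt _ _ h1 h2).ne
          · have h1' : (τ i : ℕ) < σ i := h1
            rw [wv_zero (by omega), wv_zero (by omega)]
        · rw [h1]
        · by_cases h2 : m ≤ (τ i : ℕ)
          · exact absurd key2 (hlt _ _ h1 h2).ne'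
          · have h1' : (σ i : ℕ) < τ i := h1
            rw [wv_zero (by omega), wv_zero (by omega)]
      · rintro rfl
        exact ⟨σ, hσ, rfl⟩
    rw [hset, convexHull_singleton] at hc2
    rw [hc2, setDim_singleton] at hd
    omega

lemma isE_iff {n m : ℕ} (hmn : m < n) (hm : 1 ≤ m) (A : Set (Fin n → ℝ)) :
    (IsExpFace (genPerm n (m + 1)) A ∧ setDim A = 1) ↔ IsE n m A :=
  ⟨fun h => face_isE hmn hm h.1 h.2, isE_face hmn hm⟩

lemma vtx_mem_segment {n m : ℕ} (hmn : m < n) {σ τ ρ : Equiv.Perm (Fin n)}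
    (h : vtx n m ρ ∈ segment ℝ (vtx n m σ) (vtx n m τ)) :
    vtx n m ρ = vtx n m σ ∨ vtx n m ρ = vtx n m τ := by
  rw [← insert_endpoints_openSegment] at h
  rcases h with h | h | h
  · exact Or.inl h
  · exact Or.inr h
  · left
    exact ((mem_extremePoints.1 (vtx_extreme hmn ρ)).2 _ (vtx_mem n m hmn σ) _
      (vtx_mem n m hmn τ) h).1.symm

lemma dim_genPerm {n m : ℕ} (hmn : m < n) (hm : 1 ≤ m) : setDim (genPerm n (m + 1)) = n - 1 := by
  unfold setDim
  set D := (affineSpan ℝ (genPerm n (m + 1))).direction with hD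
  set z : Fin n := ⟨n - 1, by omega⟩ with hz
  set y : Fin n := ⟨n - 2, by omega⟩ with hy
  have hyz : wv n m y < wv n m z := wv_lt hm (by rw [Fin.lt_def]; simp only [hy, hz]; omega)
    (by simp only [hz]; omega)
  have hyzne : y ≠ z := by intro h; rw [h] at hyz; exact lt_irrefl _ hyz
  have hmem : ∀ a b : Fin n, (Pi.single a 1 - Pi.single b 1 : Fin n → ℝ) ∈ D := by
    intro a b
    by_cases hab : a = b
    · subst hab; simp
    obtain ⟨σ, h1, h2⟩ : ∃ σ : Equiv.Perm (Fin n), σ a = z ∧ σ b = y := by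
      refine ⟨Equiv.swap (Equiv.swap a z b) y * Equiv.swap a z, ?_, ?_⟩
      · rw [Equiv.Perm.mul_apply, Equiv.swap_apply_left]
        apply Equiv.swap_apply_of_ne_of_ne
        · intro h
          apply hab
          apply (Equiv.swap a z).injective
          rw [← h, Equiv.swap_apply_left]
        · exact hyzne.symm
      · rw [Equiv.Perm.mul_apply, Equiv.swap_apply_left]
    have h3 : vtx n m σ - vtx n m (Equiv.swap y z * σ) ∈ D :=
      AffineSubspace.vsub_mem_direction (subset_affineSpan _ _ (vtx_mem n m hmn _))
        (subset_affineSpan _ _ (vtx_mem n m hmn _))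
    have h4 : vtx n m σ - vtx n m (Equiv.swap y z * σ) =
        (wv n m z - wv n m y) • (Pi.single a 1 - Pi.single b 1 : Fin n → ℝ) := by
      funext i
      simp only [vtx, Pi.sub_apply, Pi.smul_apply, smul_eq_mul, Equiv.Perm.mul_apply]
      by_cases hia : i = a
      · subst hia
        rw [h1, Equiv.swap_apply_right]
        simp [Pi.single_apply, hab]
      by_cases hib : i = b
      · subst hib
        rw [h2, Equiv.swap_apply_left]
        simp [Pi.single_apply, hia]
      rw [Equiv.swap_apply_of_ne_of_ne]
      · simp [Pi.single_apply, hia, hib]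
      · rw [← h2]; exact fun h => hib (σ.injective h)
      · rw [← h1]; exact fun h => hia (σ.injective h)
    rw [h4] at h3
    exact (Submodule.smul_mem_iff _ (sub_pos.2 hyz).ne').1 h3
  have hup : Module.finrank ℝ D < n := by
    have hle : D ≤ LinearMap.ker (∑ i : Fin n, LinearMap.proj (R := ℝ) (φ := fun _ => ℝ) i) := by
      rw [hD, genPerm_eq n m hmn, affineSpan_convexHull, direction_affineSpan, vectorSpan_def,
        Submodule.span_le]
      rintro _ ⟨_, ⟨σ, rfl⟩, _, ⟨τ, rfl⟩, rfl⟩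
      simp only [SetLike.mem_coe, LinearMap.mem_ker, LinearMap.sum_apply, LinearMap.proj_apply,
        vsub_eq_sub, Pi.sub_apply, Finset.sum_sub_distrib, vtx]
      rw [Equiv.sum_comp σ (wv n m), Equiv.sum_comp τ (wv n m), sub_self]
    have hne : D ≠ ⊤ := by
      intro h
      have h5 : (Pi.single z 1 : Fin n → ℝ) ∈ D := by rw [h]; trivial
      have := hle h5
      simp at this
    have := Submodule.finrank_lt hne
    simpa using this
  have hlow : n ≤ Module.finrank ℝ D + 1 := by
    have htop : D ⊔ Submodule.span ℝ {(Pi.single z 1 : Fin n → ℝ)} = ⊤ := by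
      rw [eq_top_iff]
      intro x _
      have hx : x = ∑ i, x i • (Pi.single i 1 - Pi.single z 1 : Fin n → ℝ) +
          (∑ i, x i) • (Pi.single z 1 : Fin n → ℝ) := by
        funext j
        simp [Finset.sum_apply, Pi.single_apply, mul_sub, Finset.sum_sub_distrib, Finset.sum_mul]
      rw [hx]
      apply Submodule.add_mem_sup
      · exact Submodule.sum_mem _ (fun i _ => Submodule.smul_mem _ _ (hmem i z))
      · exact Submodule.smul_mem _ _ (Submodule.mem_span_singleton_self _)
    have h6 := Submodule.finrank_add_le_finrank_add_finrank D
      (Submodule.span ℝ {(Pi.single z 1 : Fin n → ℝ)})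
    rw [htop, finrank_top, finrank_span_singleton (by simp)] at h6
    simpa using h6
  omega

/-- the transposition giving the neighbour indexed by j -/
def tt {n m : ℕ} (hmn : m < n) (j : Fin n) : Equiv.Perm (Fin n) :=
  if m < (j : ℕ) then Equiv.swap ⟨(j : ℕ) - 1, by omega⟩ j else Equiv.swap j ⟨m, hmn⟩

lemma tt_ne {n m : ℕ} (hmn : m < n) (hm : 1 ≤ m) (σ : Equiv.Perm (Fin n)) (j : Fin n)
    (hj : (j : ℕ) ≠ m) : vtx n m σ ≠ vtx n m (tt hmn j * σ) := by
  unfold tt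
  split_ifs with h
  · exact vtx_ne hm σ (by simp only; omega) (by omega)
  · exact vtx_ne hm σ (by simp only; omega) (by simp)

lemma vtx_swap_low {n m : ℕ} (σ : Equiv.Perm (Fin n)) {a b : Fin n}
    (ha : (a : ℕ) < m) (hb : (b : ℕ) < m) : vtx n m (Equiv.swap a b * σ) = vtx n m σ := by
  funext i
  simp only [vtx, Equiv.Perm.mul_apply, Equiv.swap_apply_def]
  split_ifs with h1 h2
  · rw [h1, wv_zero ha, wv_zero hb]
  · rw [h2, wv_zero ha, wv_zero hb]
  · rfl

lemma tt_isE {n m : ℕ} (hmn : m < n) (hm : 1 ≤ m) (σ : Equiv.Perm (Fin n)) (j : Fin n)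
    (hj : (j : ℕ) ≠ m) : IsE n m (segment ℝ (vtx n m σ) (vtx n m (tt hmn j * σ))) := by
  unfold tt
  split_ifs with h
  · exact ⟨σ, _, j, by simp only; omega, by omega, rfl⟩
  · have hj' : (j : ℕ) < m := by omega
    set q : Fin n := ⟨m - 1, by omega⟩ with hq
    set p : Fin n := ⟨m, hmn⟩ with hp
    have hqm : (q : ℕ) < m := by simp only [hq]; omega
    have hqp : q ≠ p := by intro h; rw [h] at hqm; simp [hp] at hqm
    have hjp : j ≠ p := by intro h; rw [h] at hj'; simp [hp] at hj'
    refine ⟨Equiv.swap j q * σ, q, p, by simp only [hq, hp]; omega, by simp [hp], ?_⟩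
    rw [vtx_swap_low σ hj' hqm]
    congr 1
    funext i
    simp only [vtx, Equiv.Perm.mul_apply]
    generalize σ i = x
    by_cases h1 : x = j
    · subst h1
      simp
    by_cases h2 : x = p
    · subst h2
      rw [Equiv.swap_apply_right, Equiv.swap_apply_of_ne_of_ne h1 hqp.symm,
        Equiv.swap_apply_right, wv_zero hj', wv_zero hqm]
    rw [Equiv.swap_apply_of_ne_of_ne h1 h2]
    by_cases h3 : x = q
    · subst h3
      rw [Equiv.swap_apply_right, Equiv.swap_apply_of_ne_of_ne (Ne.symm h1) hjp, wv_zero hj',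
        wv_zero hqm]
    rw [Equiv.swap_apply_of_ne_of_ne h1 h3, Equiv.swap_apply_of_ne_of_ne h3 h2]

lemma tt_inj {n m : ℕ} (hmn : m < n) (hm : 1 ≤ m) (σ : Equiv.Perm (Fin n)) (j j' : Fin n)
    (hj : (j : ℕ) ≠ m) (hj' : (j' : ℕ) ≠ m)
    (h : vtx n m (tt hmn j * σ) = vtx n m (tt hmn j' * σ)) : j = j' := by
  have key : ∀ x, wv n m (tt hmn j x) = wv n m (tt hmn j' x) := by
    intro x
    have := congrFun h (σ.symm x)
    simpa [vtx] using this
  have aux : ∀ a b : Fin n, m < (a : ℕ) → (b : ℕ) < a →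
      wv n m (tt hmn a a) ≠ wv n m (tt hmn b a) := by
    intro a b ha hba
    have e1 : tt hmn b a = a := by
      unfold tt
      split_ifs with h
      · apply Equiv.swap_apply_of_ne_of_ne <;> intro h' <;> rw [Fin.ext_iff] at h' <;>
          (try simp only at h') <;> omega
      · apply Equiv.swap_apply_of_ne_of_ne <;> intro h' <;> rw [Fin.ext_iff] at h' <;>
          (try simp only at h') <;> omega
    rw [e1]
    unfold tt
    rw [if_pos ha, Equiv.swap_apply_right]
    apply (wv_lt hm _ (by omega)).ne
    rw [Fin.lt_def]
    simp only
    omega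
  by_contra hne
  have hne' : (j : ℕ) ≠ j' := fun h => hne (Fin.ext h)
  by_cases hbig : m < (j : ℕ) ∨ m < (j' : ℕ)
  · rcases lt_or_gt_of_ne hne' with h1 | h1
    · exact aux j' j (by omega) h1 (key j').symm
    · exact aux j j' (by omega) h1 (key j)
  · have h1 := key j
    unfold tt at h1
    rw [if_neg (by omega), if_neg (by omega), Equiv.swap_apply_left,
      Equiv.swap_apply_of_ne_of_ne hne (fun h => hj (by rw [h]))] at h1
    have h2 : wv n m j < wv n m ⟨m, hmn⟩ := wv_lt hm (by
      rw [Fin.lt_def]; simp only; omega) (by simp)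
    exact absurd h1 h2.ne'

lemma edge_surj {n m : ℕ} (hmn : m < n) (hm : 1 ≤ m) (σ τ : Equiv.Perm (Fin n))
    (h : vtx n m σ = vtx n m τ) (q p : Fin n) (hqp : (q : ℕ) + 1 = p) (hp : m ≤ (p : ℕ)) :
    ∃ j : Fin n, (j : ℕ) ≠ m ∧ vtx n m (Equiv.swap q p * τ) = vtx n m (tt hmn j * σ) := by
  have hw : ∀ i, σ i = τ i ∨ ((σ i : ℕ) < m ∧ (τ i : ℕ) < m) := fun i => wv_eq hm (congrFun h i)
  by_cases hpm : m < (p : ℕ)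
  · refine ⟨p, by omega, ?_⟩
    unfold tt
    rw [if_pos hpm]
    have : (⟨(p : ℕ) - 1, by omega⟩ : Fin n) = q := by apply Fin.ext; simp only; omega
    rw [this]
    funext i
    simp only [vtx, Equiv.Perm.mul_apply]
    rcases hw i with h1 | ⟨h1, h2⟩
    · rw [h1]
    · rw [Equiv.swap_apply_of_ne_of_ne, Equiv.swap_apply_of_ne_of_ne, wv_zero h1, wv_zero h2] <;>
      · intro h3
        have h4 := congrArg Fin.val h3
        omega
  · have hpm' : (p : ℕ) = m := by omega
    have hpe : (⟨m, hmn⟩ : Fin n) = p := Fin.ext hpm'.symm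
    have hj : (σ (τ.symm q) : ℕ) < m := by
      rcases hw (τ.symm q) with h1 | ⟨h1, -⟩
      · rw [h1]; simp; omega
      · exact h1
    refine ⟨σ (τ.symm q), by omega, ?_⟩
    unfold tt
    rw [if_neg (by omega), hpe]
    funext i
    simp only [vtx, Equiv.Perm.mul_apply]
    have hqm : (q : ℕ) < m := by omega
    by_cases h1 : τ i = q
    · have : i = τ.symm q := by rw [← h1]; simp
      rw [h1, Equiv.swap_apply_left, this, Equiv.swap_apply_left]
    have h1' : σ i ≠ σ (τ.symm q) := by
      intro h2
      apply h1
      rw [σ.injective h2]; simp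
    by_cases h2 : τ i = p
    · have h3 : σ i = p := by
        rcases hw i with h3 | ⟨-, h3⟩
        · rw [h3, h2]
        · rw [h2] at h3; omega
      rw [h2, h3, Equiv.swap_apply_right, Equiv.swap_apply_right, wv_zero hqm, wv_zero hj]
    have h2' : σ i ≠ p := by
      intro h3
      rcases hw i with h4 | ⟨h4, -⟩
      · exact h2 (by rw [← h4, h3])
      · rw [h3] at h4; omega
    rw [Equiv.swap_apply_of_ne_of_ne h1 h2, Equiv.swap_apply_of_ne_of_ne h1' h2']
    exact (congrFun h i).symm

lemma degree_eq {n m : ℕ} (hmn : m < n) (hm : 1 ≤ m) (σ : Equiv.Perm (Fin n)) :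
    Nat.card {A : Set (Fin n → ℝ) // IsE n m A ∧ vtx n m σ ∈ A} = n - 1 := by
  have hf : Nat.card {j : Fin n // (j : ℕ) ≠ m} = n - 1 := by
    have e : ∀ j : Fin n, (j : ℕ) ≠ m ↔ j ≠ (⟨m, hmn⟩ : Fin n) := fun j => by
      rw [Ne, Ne, Fin.ext_iff]
    simp only [e]
    rw [Nat.card_eq_fintype_card]
    simp
  rw [← hf]
  symm
  let f : {j : Fin n // (j : ℕ) ≠ m} → {A : Set (Fin n → ℝ) // IsE n m A ∧ vtx n m σ ∈ A} :=
    fun j => ⟨segment ℝ (vtx n m σ) (vtx n m (tt hmn j.1 * σ)),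
      tt_isE hmn hm σ j.1 j.2, left_mem_segment _ _ _⟩
  apply Nat.card_congr (Equiv.ofBijective f ⟨?_, ?_⟩)
  · rintro ⟨j, hj⟩ ⟨j', hj'⟩ h
    have h1 : segment ℝ (vtx n m σ) (vtx n m (tt hmn j * σ)) =
        segment ℝ (vtx n m σ) (vtx n m (tt hmn j' * σ)) := congrArg Subtype.val h
    have h2 : vtx n m (tt hmn j * σ) ∈ segment ℝ (vtx n m σ) (vtx n m (tt hmn j' * σ)) := by
      rw [← h1]; exact right_mem_segment _ _ _
    apply Subtype.ext
    rcases vtx_mem_segment hmn h2 with h3 | h3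
    · exact absurd h3.symm (tt_ne hmn hm σ j hj)
    · exact tt_inj hmn hm σ j j' hj hj' h3
  · rintro ⟨A, ⟨τ, q, p, hqp, hp, rfl⟩, hu⟩
    rcases vtx_mem_segment hmn hu with h3 | h3
    · obtain ⟨j, hj, h4⟩ := edge_surj hmn hm σ τ h3 q p hqp hp
      refine ⟨⟨j, hj⟩, Subtype.ext ?_⟩
      simp only [f]
      rw [← h4, h3]
    · obtain ⟨j, hj, h4⟩ := edge_surj hmn hm σ _ h3 q p hqp hp
      refine ⟨⟨j, hj⟩, Subtype.ext ?_⟩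
      simp only [f]
      rw [← h4, h3, segment_symm]
      congr 2
      rw [← mul_assoc, Equiv.swap_mul_self, one_mul]

lemma card_VV {n m : ℕ} (hmn : m < n) (hm : 1 ≤ m) :
    (Finset.univ.image (vtx n m)).card * m.factorial = n.factorial := by
  classical
  have h1 : ∀ b ∈ Finset.univ.image (vtx n m),
      (Finset.univ.filter (fun σ => vtx n m σ = b)).card = m.factorial := by
    intro b hb
    obtain ⟨σ, -, rfl⟩ := Finset.mem_image.1 hb
    have hc : Fintype.card (Equiv.Perm {i : Fin n // (i : ℕ) < m}) = m.factorial := by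
      rw [Fintype.card_perm, Fintype.card_subtype]
      congr 1
      have : (Finset.univ.filter (fun i : Fin n => (i : ℕ) < m)) = Finset.Iio ⟨m, hmn⟩ := by
        ext i
        simp [Fin.lt_def]
      rw [this, Fin.card_Iio]
    rw [← hc, Fintype.card_congr (Equiv.Perm.subtypeEquivSubtypePerm _), Fintype.card_subtype]
    refine Finset.card_bij' (fun τ _ => τ * σ⁻¹) (fun g _ => g * σ) ?_ ?_ ?_ ?_
    · intro τ hτ
      simp only [Finset.mem_filter, Finset.mem_univ, true_and] at hτ ⊢
      intro a ha
      have := congrFun hτ (σ⁻¹ a)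
      simp only [vtx] at this
      rcases wv_eq hm this with h | ⟨-, h⟩
      · rw [Equiv.Perm.mul_apply, h]; simp
      · exact absurd (by simpa using h) ha
    · intro g hg
      simp only [Finset.mem_filter, Finset.mem_univ, true_and] at hg ⊢
      funext i
      simp only [vtx, Equiv.Perm.mul_apply]
      generalize σ i = x
      by_cases hx : (x : ℕ) < m
      · have : (g x : ℕ) < m := by
          by_contra hgx
          have := g.injective (hg _ hgx)
          rw [this] at hgx
          exact hgx hx
        rw [wv_zero hx, wv_zero this]
      · rw [hg x hx]
    · intro τ _; simp
    · intro g _; simp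
  have h2 := Finset.card_eq_sum_card_image (vtx n m) Finset.univ
  rw [Finset.sum_congr rfl h1, Finset.sum_const, smul_eq_mul, Finset.card_univ,
    Fintype.card_perm, Fintype.card_fin] at h2
  exact h2.symm

lemma finite_isE (n m : ℕ) : {A | IsE n m A}.Finite := by
  apply Set.Finite.subset (Set.finite_range
    (fun x : Equiv.Perm (Fin n) × Fin n × Fin n =>
      segment ℝ (vtx n m x.1) (vtx n m (Equiv.swap x.2.1 x.2.2 * x.1))))
  rintro A ⟨σ, q, p, -, -, rfl⟩
  exact ⟨(σ, q, p), rfl⟩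

lemma card_edges {n m : ℕ} (hmn : m < n) (hm : 1 ≤ m) :
    Nat.card {A : Set (Fin n → ℝ) // IsE n m A} * 2 * m.factorial = (n - 1) * n.factorial := by
  classical
  set t := (finite_isE n m).toFinset with ht
  have hmt : ∀ A, A ∈ t ↔ IsE n m A := fun A => by simp [ht]
  have hcard : Nat.card {A : Set (Fin n → ℝ) // IsE n m A} = t.card := by
    rw [← Nat.card_eq_finsetCard]
    exact Nat.card_congr (Equiv.subtypeEquivRight (fun A => (hmt A).symm))
  have hmain := Finset.card_mul_eq_card_mul (fun (u : Fin n → ℝ) (A : Set (Fin n → ℝ)) => u ∈ A)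
    (s := Finset.univ.image (vtx n m)) (t := t) (m := n - 1) (n := 2) ?_ ?_
  · rw [hcard, ← hmain, ← card_VV hmn hm]
    ring
  · intro u hu
    obtain ⟨σ, -, rfl⟩ := Finset.mem_image.1 hu
    rw [← degree_eq hmn hm σ, ← Nat.card_eq_finsetCard]
    apply Nat.card_congr
    apply Equiv.subtypeEquivRight
    intro A
    simp [Finset.mem_bipartiteAbove, hmt]
  · intro A hA
    obtain ⟨σ, q, p, hqp, hp, rfl⟩ := (hmt A).1 hA
    rw [← Finset.card_pair (vtx_ne hm σ (show (q : ℕ) < p by omega) hp)]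
    congr 1
    ext u
    simp only [Finset.mem_bipartiteBelow, Finset.mem_image, Finset.mem_univ, true_and,
      Finset.mem_insert, Finset.mem_singleton]
    constructor
    · rintro ⟨⟨τ, rfl⟩, h⟩
      exact vtx_mem_segment hmn h
    · rintro (rfl | rfl)
      · exact ⟨⟨_, rfl⟩, left_mem_segment _ _ _⟩
      · exact ⟨⟨_, rfl⟩, right_mem_segment _ _ _⟩

/-- Π_{n−1}(k−1) has exactly (n−1)·n!/(2·(k−1)!) edges
(1-dimensional nonempty exposed faces), every vertex lies on exactly n−1 of
them, and Π_{n−1}(k−1) is a polytope of dimension n−1 (hence simple). -/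
theorem genPerm_edges_simple (n k : ℕ) (hk : 2 ≤ k) (hkn : k ≤ n) :
    Nat.card {A : Set (Fin n → ℝ) // IsExpFace (genPerm n k) A ∧ setDim A = 1}
      = (n - 1) * Nat.factorial n / (2 * Nat.factorial (k - 1)) ∧
    (∀ u ∈ Set.extremePoints ℝ (genPerm n k),
      Nat.card {A : Set (Fin n → ℝ) //
        IsExpFace (genPerm n k) A ∧ setDim A = 1 ∧ u ∈ A} = n - 1) ∧
    setDim (genPerm n k) = n - 1 := by
  obtain ⟨m, rfl⟩ : ∃ m, k = m + 1 := ⟨k - 1, by omega⟩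
  have hmn : m < n := by omega
  have hm : 1 ≤ m := by omega
  refine ⟨?_, ?_, dim_genPerm hmn hm⟩
  · simp only [isE_iff hmn hm, Nat.add_sub_cancel]
    rw [← card_edges hmn hm, mul_assoc, Nat.mul_div_cancel]
    have := m.factorial_pos
    omega
  · intro u hu
    rw [genPerm_eq n m hmn] at hu
    obtain ⟨σ, rfl⟩ := extremePoints_convexHull_subset hu
    simp only [← and_assoc, isE_iff hmn hm]
    exact degree_eq hmn hm σ
end

section
/- (Rado) Let v ∈ ℝ^n with v_0 ≥ v_1 ≥ ⋯ ≥ v_{n−1}. Then P_{n−1}(v) = {t ∈ ℝ^n : ∑_{i=0}^{n−1} t_i = ∑_{i=0}^{n−1} v_i, and for every subset I ⊆ {0,…,n−1}, ∑_{i∈I} t_i ≤ ∑_{i=0}^{|I|−1} v_i}. -/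
open Pointwise

theorem rado_top {n : ℕ} (v : Fin n → ℝ) (hv : ∀ i j : Fin n, i ≤ j → v j ≤ v i)
    (J : Finset (Fin n)) :
    ∑ i ∈ J, v i ≤ ∑ i ∈ Finset.univ.filter (fun i : Fin n => (i : ℕ) < J.card), v i := by
  rcases Nat.eq_zero_or_pos J.card with h0 | hpos
  · have : J = ∅ := Finset.card_eq_zero.mp h0
    subst this
    simp
  have hle : J.card ≤ n := by simpa using Finset.card_le_univ J
  set A := Finset.univ.filter (fun i : Fin n => (i : ℕ) < J.card) with hA
  have hcard : A.card = J.card := by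
    rw [hA, Fin.card_filter_val_lt]; omega
  set c := v ⟨J.card - 1, by omega⟩ with hc
  have h1 : ∑ i ∈ J, (v i - c) ≤ ∑ i ∈ A, (v i - c) := by
    calc ∑ i ∈ J, (v i - c) ≤ ∑ i ∈ J, (if i ∈ A then (v i - c) else 0) := by
          apply Finset.sum_le_sum
          intro i _
          split_ifs with hi
          · exact le_rfl
          · have : v i ≤ c := hv _ _ (by
              simp only [hA, Finset.mem_filter, Finset.mem_univ, true_and] at hi
              rw [Fin.le_def]; simp only; omega)
            linarith
      _ ≤ ∑ i, (if i ∈ A then (v i - c) else 0) := by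
          apply Finset.sum_le_sum_of_subset_of_nonneg (Finset.subset_univ _)
          intro i _ _
          split_ifs with hi
          · have : c ≤ v i := hv _ _ (by
              simp only [hA, Finset.mem_filter, Finset.mem_univ, true_and] at hi
              rw [Fin.le_def]; simp only; omega)
            linarith
          · exact le_rfl
      _ = ∑ i ∈ A, (v i - c) := by simp
  rw [Finset.sum_sub_distrib, Finset.sum_sub_distrib, Finset.sum_const, Finset.sum_const,
    hcard] at h1
  linarith

theorem rado_abel (n : ℕ) (c d : ℕ → ℝ) (hc : ∀ k, k + 1 < n → c (k + 1) ≤ c k)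
    (hd : ∀ k, k ≤ n → 0 ≤ ∑ i ∈ Finset.range k, d i) (k : ℕ) (hk : k < n) :
    c k * ∑ i ∈ Finset.range (k + 1), d i ≤ ∑ i ∈ Finset.range (k + 1), c i * d i := by
  induction k with
  | zero => simp
  | succ k ih =>
    rw [Finset.sum_range_succ, Finset.sum_range_succ (fun i => c i * d i), mul_add]
    have h1 := ih (by omega)
    have h2 := mul_le_mul_of_nonneg_right (hc k hk) (hd (k + 1) (by omega))
    linarith

theorem rado_abel_fin (n : ℕ) (c d : Fin n → ℝ) (hc : Antitone c)
    (hd : ∀ k, k ≤ n → 0 ≤ ∑ i ∈ Finset.univ.filter (fun i : Fin n => (i : ℕ) < k), d i)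
    (h0 : ∑ i, d i = 0) : 0 ≤ ∑ i, c i * d i := by
  rcases Nat.eq_zero_or_pos n with rfl | hn
  · simp
  let cc : ℕ → ℝ := fun j => if h : j < n then c ⟨j, h⟩ else 0
  let dd : ℕ → ℝ := fun j => if h : j < n then d ⟨j, h⟩ else 0
  have hcc : ∀ i : Fin n, cc i = c i := fun i => by simp [cc]
  have hdd : ∀ i : Fin n, dd i = d i := fun i => by simp [dd]
  have key : ∀ k, k ≤ n → ∑ i ∈ Finset.univ.filter (fun i : Fin n => (i : ℕ) < k), d i
      = ∑ j ∈ Finset.range k, dd j := by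
    intro k hk
    rw [Finset.sum_filter]
    have h1 := Finset.sum_range (n := n) (fun j => if j < k then dd j else 0)
    simp only [hdd] at h1
    rw [← h1, ← Finset.sum_filter]
    apply Finset.sum_congr _ (fun _ _ => rfl)
    ext j
    simp only [Finset.mem_filter, Finset.mem_range]
    omega
  have h := rado_abel n cc dd (fun k hk => by
      have hkk : k < n := by omega
      simp only [cc, hk, hkk, dif_pos]
      exact hc (by rw [Fin.le_def]; simp))
    (fun k hk => by rw [← key k hk]; exact hd k hk) (n - 1) (by omega)
  rw [Nat.sub_add_cancel hn, Finset.sum_range, Finset.sum_range] at h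
  simp only [hcc, hdd, h0, mul_zero] at h
  exact h

/-- Rado: for v with v_0 ≥ v_1 ≥ ⋯ ≥ v_{n−1}, the permutahedron
P_{n−1}(v) is cut out by the equality ∑ t_i = ∑ v_i together with the
inequalities ∑_{i∈I} t_i ≤ v_0 + ⋯ + v_{|I|−1} for all I ⊆ {0,…,n−1}. -/
theorem rado_theorem (n : ℕ) (v : Fin n → ℝ) (hv : ∀ i j : Fin n, i ≤ j → v j ≤ v i) :
    permPoly v = {t : Fin n → ℝ |
      ∑ i, t i = ∑ i, v i ∧
      ∀ I : Finset (Fin n), ∑ i ∈ I, t i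
        ≤ ∑ i ∈ Finset.univ.filter (fun i : Fin n => (i : ℕ) < I.card), v i} := by
  apply Set.Subset.antisymm
  · apply convexHull_min
    · rintro w ⟨σ, rfl⟩
      refine ⟨Equiv.sum_comp σ v, fun I => ?_⟩
      have h := rado_top v hv (I.map σ.toEmbedding)
      rw [Finset.sum_map, Finset.card_map] at h
      exact h
    · rintro x ⟨hx1, hx2⟩ y ⟨hy1, hy2⟩ a b ha hb hab
      refine ⟨?_, fun I => ?_⟩
      · simp only [Pi.add_apply, Pi.smul_apply, smul_eq_mul, Finset.sum_add_distrib,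
          ← Finset.mul_sum, hx1, hy1]
        rw [← add_mul, hab, one_mul]
      · simp only [Pi.add_apply, Pi.smul_apply, smul_eq_mul, Finset.sum_add_distrib,
          ← Finset.mul_sum]
        have h1 := mul_le_mul_of_nonneg_left (hx2 I) ha
        have h2 := mul_le_mul_of_nonneg_left (hy2 I) hb
        refine (add_le_add h1 h2).trans (le_of_eq ?_)
        rw [← add_mul, hab, one_mul]
  · rintro t ⟨ht1, ht2⟩
    by_contra hnot
    have hfin : Set.Finite {w | ∃ σ : Equiv.Perm (Fin n), w = v ∘ σ} := by
      refine (Set.finite_range (fun σ : Equiv.Perm (Fin n) => v ∘ σ)).subset ?_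
      rintro w ⟨σ, rfl⟩
      exact ⟨σ, rfl⟩
    have hclosed : IsClosed (permPoly v) := hfin.isClosed_convexHull (𝕜 := ℝ)
    obtain ⟨f, u, hf1, hf2⟩ :=
      geometric_hahn_banach_closed_point (convex_convexHull ℝ _) hclosed hnot
    have hf : ∀ x : Fin n → ℝ, f x = ∑ i, f (Pi.single i 1) * x i := by
      intro x
      conv_lhs => rw [pi_eq_sum_univ' x]
      rw [map_sum]
      refine Finset.sum_congr rfl fun i _ => ?_
      rw [map_smul, smul_eq_mul, mul_comm]
    set c : Fin n → ℝ := fun i => f (Pi.single i 1) with hc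
    let τ : Equiv.Perm (Fin n) := Tuple.sort (fun i => - c i)
    have hτ : Antitone (c ∘ τ) := by
      intro i j hij
      have := Tuple.monotone_sort (fun i => - c i) hij
      simpa [τ] using this
    have hab := rado_abel_fin n (c ∘ τ) (fun i => v i - t (τ i)) hτ (by
      intro k hk
      rw [Finset.sum_sub_distrib, sub_nonneg]
      have h := ht2 ((Finset.univ.filter (fun i : Fin n => (i : ℕ) < k)).map τ.toEmbedding)
      rw [Finset.sum_map, Finset.card_map, Fin.card_filter_val_lt, min_eq_right hk] at h
      exact h) (by
      rw [Finset.sum_sub_distrib, Equiv.sum_comp τ t, ht1, sub_self])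
    have h1 := hf1 (v ∘ τ.symm) (subset_convexHull ℝ _ ⟨τ.symm, rfl⟩)
    rw [hf, ← Equiv.sum_comp τ] at h1
    rw [hf, ← Equiv.sum_comp τ] at hf2
    simp only [mul_sub, Finset.sum_sub_distrib, Function.comp_apply, hc] at hab
    simp only [Function.comp_apply, Equiv.symm_apply_apply] at h1
    linarith
end

section
/- Let v ∈ ℝ^n with v_0 ≤ v_1 ≤ ⋯ ≤ v_{n−1}. There exist nonnegative real numbers y_1, …, y_n such that P_{n−1}(v) = ∑_{k=1}^{n} y_k·Π_{n−1}(k−1) (Minkowski sum of scaled sets) if and only if all backward differences of v are nonnegative, i.e. Δ^i(v)_k ≥ 0 for all 0 ≤ i ≤ k ≤ n−1. -/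
open Pointwise

/-- Backward difference of a function on the naturals. -/
def natBdiff (g : ℕ → ℝ) (i k : ℕ) : ℝ :=
  ∑ j ∈ Finset.range (i + 1), (-1 : ℝ) ^ j * (i.choose j) * g (k - j)

theorem natBdiff_succ (g : ℕ → ℝ) (i k : ℕ) :
    natBdiff g (i + 1) (k + 1) = natBdiff g i (k + 1) - natBdiff g i k := by
  unfold natBdiff
  have h1 : ∑ j ∈ Finset.range (i + 1), (-1 : ℝ) ^ j * (i.choose j) * g (k + 1 - j)
      = ∑ j ∈ Finset.range (i + 1 + 1), (-1 : ℝ) ^ j * (i.choose j) * g (k + 1 - j) := by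
    rw [Finset.sum_range_succ _ (i + 1)]
    simp
  rw [h1, Finset.sum_range_succ' _ (i + 1), Finset.sum_range_succ' _ (i + 1)]
  have h2 : ∀ j ∈ Finset.range (i + 1),
      (-1 : ℝ) ^ (j + 1) * ((i + 1).choose (j + 1)) * g (k + 1 - (j + 1))
      = (-1 : ℝ) ^ (j + 1) * (i.choose (j + 1)) * g (k + 1 - (j + 1))
        - (-1 : ℝ) ^ j * (i.choose j) * g (k - j) := by
    intro j _
    rw [Nat.choose_succ_succ, Nat.add_sub_add_right]
    push_cast
    ring
  rw [Finset.sum_congr rfl h2, Finset.sum_sub_distrib]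
  simp
  ring

theorem natBdiff_choose (l i : ℕ) : ∀ k, i ≤ k →
    natBdiff (fun m => (m.choose l : ℝ)) i k
      = if i ≤ l then ((k - i).choose (l - i) : ℝ) else 0 := by
  induction i with
  | zero => intro k _; simp [natBdiff]
  | succ i ih =>
    intro k hk
    obtain ⟨k, rfl⟩ : ∃ m, k = m + 1 := ⟨k - 1, by omega⟩
    rw [natBdiff_succ, ih _ (by omega), ih _ (by omega)]
    by_cases h : i + 1 ≤ l
    · have h' : i ≤ l := by omega
      rw [if_pos h, if_pos h', if_pos h']
      have e1 : k + 1 - i = (k - i) + 1 := by omega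
      have e2 : l - i = (l - (i + 1)) + 1 := by omega
      have e3 : k + 1 - (i + 1) = k - i := by omega
      rw [e1, e2, e3, Nat.choose_succ_succ]
      push_cast
      ring
    · rw [if_neg h]
      by_cases h' : i ≤ l
      · have : l - i = 0 := by omega
        simp [h', this]
      · simp [h']

theorem newton (g : ℕ → ℝ) (m : ℕ) :
    g m = ∑ l ∈ Finset.range (m + 1), natBdiff g l l * (m.choose l : ℝ) := by
  have h := shift_eq_sum_fwdDiff_iter (1 : ℕ) g m 0
  simp only [zero_add, smul_eq_mul, mul_one] at h
  rw [h]
  refine Finset.sum_congr rfl fun l _ => ?_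
  rw [nsmul_eq_mul, mul_comm]
  congr 1
  rw [fwdDiff_iter_eq_sum_shift, natBdiff, ← Finset.sum_range_reflect]
  refine Finset.sum_congr rfl fun j hj => ?_
  have hj' : j ≤ l := by simpa [Nat.lt_succ_iff] using hj
  have e1 : l + 1 - 1 - j = l - j := by omega
  have e2 : l - (l - j) = j := by omega
  simp [e2, Nat.choose_symm hj', zsmul_eq_mul]

/-- The indicator of the `σ`-largest element of `F`. -/
noncomputable def topPt {n : ℕ} (σ : Equiv.Perm (Fin n)) (F : Finset (Fin n)) : Fin n → ℝ :=
  fun i => if i ∈ F ∧ ∀ j ∈ F, σ j ≤ σ i then 1 else 0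

theorem topPt_eq {n : ℕ} (σ : Equiv.Perm (Fin n)) (F : Finset (Fin n)) (hF : F.Nonempty) :
    ∃ m ∈ F, (∀ j ∈ F, σ j ≤ σ m) ∧ topPt σ F = Pi.single m 1 := by
  obtain ⟨m, hm, hmax⟩ := F.exists_max_image σ hF
  refine ⟨m, hm, hmax, ?_⟩
  funext i
  by_cases h : i = m
  · subst h
    have : i ∈ F ∧ ∀ j ∈ F, σ j ≤ σ i := ⟨hm, hmax⟩
    rw [topPt, if_pos this, Pi.single_eq_same]
  · have : ¬ (i ∈ F ∧ ∀ j ∈ F, σ j ≤ σ i) := fun ⟨h1, h2⟩ =>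
      h (σ.injective (le_antisymm (hmax i h1) (h2 m hm)))
    simp only [topPt, if_neg this, Pi.single_apply, if_neg h]

theorem topPt_mem {n : ℕ} (σ : Equiv.Perm (Fin n)) (F : Finset (Fin n)) (hF : F.Nonempty) :
    topPt σ F ∈ stdSimplexOn n F := by
  obtain ⟨m, hm, -, h⟩ := topPt_eq σ F hF
  rw [h]
  refine ⟨fun i => ?_, fun i hi => ?_, by simp⟩
  · rw [Pi.single_apply]; split_ifs <;> simp
  · rw [Pi.single_apply, if_neg]; rintro rfl; exact hi hm

theorem sum_topPt {n : ℕ} (σ : Equiv.Perm (Fin n)) (k : ℕ) :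
    ∑ F ∈ Finset.univ.powersetCard (k + 1), topPt σ F
      = fun i => (((σ i : ℕ).choose k : ℕ) : ℝ) := by
  funext i
  rw [Finset.sum_apply]
  simp only [topPt]
  rw [Finset.sum_boole]
  congr 1
  have hc : (Finset.univ.filter fun j => σ j < σ i).card = (σ i : ℕ) := by
    rw [← Fin.card_Iio (σ i)]
    refine Finset.card_bij (fun j _ => σ j) ?_ ?_ ?_
    · intro a ha; simpa using ha
    · intro a _ b _ h; exact σ.injective h
    · intro b hb; exact ⟨σ.symm b, by simpa using hb, by simp⟩
  rw [← hc, ← Finset.card_powersetCard]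
  refine Finset.card_bij' (fun F _ => F.erase i) (fun G _ => insert i G) ?_ ?_ ?_ ?_
  · intro F hF
    simp only [Finset.mem_filter, Finset.mem_powersetCard] at hF
    obtain ⟨⟨-, hcard⟩, hi, hmax⟩ := hF
    rw [Finset.mem_powersetCard]
    refine ⟨fun j hj => ?_, by rw [Finset.card_erase_of_mem hi, hcard]; rfl⟩
    rw [Finset.mem_erase] at hj
    simp only [Finset.mem_filter, Finset.mem_univ, true_and]
    exact lt_of_le_of_ne (hmax j hj.2) fun h => hj.1 (σ.injective h)
  · intro G hG
    rw [Finset.mem_powersetCard] at hG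
    have hlt : ∀ j ∈ G, σ j < σ i := fun j hj => by simpa using hG.1 hj
    have hi : i ∉ G := fun h => lt_irrefl _ (hlt i h)
    simp only [Finset.mem_filter, Finset.mem_powersetCard]
    refine ⟨⟨Finset.subset_univ _, by rw [Finset.card_insert_of_notMem hi, hG.2]⟩,
      Finset.mem_insert_self _ _, fun j hj => ?_⟩
    rcases Finset.mem_insert.1 hj with rfl | hj
    · exact le_rfl
    · exact (hlt j hj).le
  · intro F hF
    simp only [Finset.mem_filter] at hF
    exact Finset.insert_erase hF.2.1
  · intro G hG
    rw [Finset.mem_powersetCard] at hG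
    have hi : i ∉ G := fun h => lt_irrefl (σ i) (by simpa using hG.1 h)
    exact Finset.erase_insert hi

theorem convex_stdSimplexOn (n : ℕ) (F : Finset (Fin n)) : Convex ℝ (stdSimplexOn n F) := by
  rintro x ⟨hx1, hx2, hx3⟩ z ⟨hz1, hz2, hz3⟩ a b ha hb hab
  refine ⟨fun i => ?_, fun i hi => ?_, ?_⟩
  · have := mul_nonneg ha (hx1 i)
    have := mul_nonneg hb (hz1 i)
    simp only [Pi.add_apply, Pi.smul_apply, smul_eq_mul]
    linarith
  · simp [hx2 i hi, hz2 i hi]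
  · simp [Finset.sum_add_distrib, ← Finset.mul_sum, hx3, hz3, hab]

/-- The dominant vector of the Minkowski combination. -/
noncomputable def combVec {n : ℕ} (y : Fin n → ℝ) : Fin n → ℝ :=
  fun i => ∑ k : Fin n, y k * ((i : ℕ).choose (k : ℕ) : ℝ)

theorem combVec_comp {n : ℕ} (y : Fin n → ℝ) (σ : Equiv.Perm (Fin n)) :
    combVec y ∘ σ = ∑ k : Fin n, y k •
      ∑ F ∈ Finset.univ.powersetCard ((k : ℕ) + 1), topPt σ F := by
  funext i
  simp only [sum_topPt]
  simp [combVec]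

theorem clm_apply_eq {n : ℕ} (f : (Fin n → ℝ) →L[ℝ] ℝ) (x : Fin n → ℝ) :
    f x = ∑ i, x i * f (Pi.single i 1) := by
  conv_lhs => rw [pi_eq_sum_univ' x]
  rw [map_sum]
  refine Finset.sum_congr rfl fun i _ => ?_
  rw [map_smul, smul_eq_mul]

theorem clm_le_topPt {n : ℕ} (f : (Fin n → ℝ) →L[ℝ] ℝ) (σ : Equiv.Perm (Fin n))
    (hσ : ∀ i j, σ i ≤ σ j → f (Pi.single i 1) ≤ f (Pi.single j 1))
    (F : Finset (Fin n)) (hF : F.Nonempty) (x : Fin n → ℝ) (hx : x ∈ stdSimplexOn n F) :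
    f x ≤ f (topPt σ F) := by
  obtain ⟨m, hm, hmax, h⟩ := topPt_eq σ F hF
  obtain ⟨h1, h2, h3⟩ := hx
  rw [h, clm_apply_eq f x]
  calc ∑ i, x i * f (Pi.single i 1) ≤ ∑ i, x i * f (Pi.single m 1) := by
        refine Finset.sum_le_sum fun i _ => ?_
        by_cases hi : i ∈ F
        · exact mul_le_mul_of_nonneg_left (hσ _ _ (hmax i hi)) (h1 i)
        · simp [h2 i hi]
    _ = f (Pi.single m 1) := by rw [← Finset.sum_mul, h3, one_mul]

theorem nonempty_of_mem_pc {n k : ℕ} {F : Finset (Fin n)}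
    (hF : F ∈ (Finset.univ : Finset (Fin n)).powersetCard (k + 1)) : F.Nonempty := by
  rw [Finset.mem_powersetCard] at hF
  rw [← Finset.card_pos]; omega

theorem permPoly_combVec {n : ℕ} (y : Fin n → ℝ) (hy : ∀ k, 0 ≤ y k) :
    permPoly (combVec y) = ∑ k : Fin n, y k • genPerm n ((k : ℕ) + 1) := by
  apply Set.Subset.antisymm
  · refine convexHull_min ?_ ?_
    · rintro w ⟨σ, rfl⟩
      rw [combVec_comp]
      refine Set.finsetSum_mem_finsetSum _ _ _ fun k _ => Set.smul_mem_smul_set ?_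
      exact Set.finsetSum_mem_finsetSum _ _ _ fun F hF => topPt_mem σ F (nonempty_of_mem_pc hF)
    · exact convex_sum _ fun k _ => Convex.smul (convex_sum _ fun F _ => convex_stdSimplexOn n F) _
  · intro x hx
    by_contra hcon
    have hfin : {w | ∃ σ : Equiv.Perm (Fin n), w = combVec y ∘ σ}.Finite := by
      have : {w | ∃ σ : Equiv.Perm (Fin n), w = combVec y ∘ σ}
          = Set.range fun σ : Equiv.Perm (Fin n) => combVec y ∘ σ := by
        ext w; simp [eq_comm]
      rw [this]; exact Set.finite_range _
    obtain ⟨f, u, h1, h2⟩ := geometric_hahn_banach_closed_point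
      (convex_convexHull ℝ _) (hfin.isClosed_convexHull ℝ) hcon
    set c : Fin n → ℝ := fun i => f (Pi.single i 1) with hc
    have hmono := Tuple.monotone_sort c
    set σ := (Tuple.sort c).symm with hσdef
    have hσ : ∀ i j, σ i ≤ σ j → f (Pi.single i 1) ≤ f (Pi.single j 1) := by
      intro i j hij
      have := hmono hij
      simpa [hσdef, hc] using this
    have h3 := h1 _ (subset_convexHull ℝ _ ⟨σ, rfl⟩)
    rw [Set.mem_finsetSum] at hx
    obtain ⟨g, hg, rfl⟩ := hx
    have : f (∑ k, g k) ≤ f (combVec y ∘ σ) := by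
      rw [combVec_comp, map_sum, map_sum]
      refine Finset.sum_le_sum fun k hk => ?_
      obtain ⟨z, hz, hzg⟩ := hg hk
      rw [← hzg]
      simp only [map_smul, smul_eq_mul]
      refine mul_le_mul_of_nonneg_left ?_ (hy k)
      unfold genPerm at hz
      rw [Set.mem_finsetSum] at hz
      obtain ⟨q, hq, rfl⟩ := hz
      rw [map_sum, map_sum]
      exact Finset.sum_le_sum fun F hF => clm_le_topPt f σ hσ F (nonempty_of_mem_pc hF) _ (hq hF)
    linarith

theorem combVec_monotone {n : ℕ} (y : Fin n → ℝ) (hy : ∀ k, 0 ≤ y k) : Monotone (combVec y) := by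
  intro i j hij
  refine Finset.sum_le_sum fun k _ => mul_le_mul_of_nonneg_left ?_ (hy k)
  exact_mod_cast Nat.choose_le_choose _ hij

theorem dot_le_of_mem {n : ℕ} (c w x : Fin n → ℝ) (hc : Monotone c) (hw : Monotone w)
    (hx : x ∈ permPoly w) : ∑ i, c i * x i ≤ ∑ i, c i * w i := by
  have hconv : Convex ℝ {x : Fin n → ℝ | ∑ i, c i * x i ≤ ∑ i, c i * w i} := by
    refine convex_halfSpace_le ⟨fun a b => ?_, fun r a => ?_⟩ _
    · simp [mul_add, Finset.sum_add_distrib]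
    · simp only [Pi.smul_apply, smul_eq_mul, Finset.mul_sum]
      exact Finset.sum_congr rfl fun i _ => by ring
  refine convexHull_min ?_ hconv hx
  rintro _ ⟨σ, rfl⟩
  exact (hc.monovary hw).sum_mul_comp_perm_le_sum_mul

theorem permPoly_inj {n : ℕ} (v w : Fin n → ℝ) (hv : Monotone v) (hw : Monotone w)
    (h : permPoly v = permPoly w) : v = w := by
  have hself : ∀ u : Fin n → ℝ, u ∈ permPoly u := fun u => subset_convexHull ℝ _ ⟨1, rfl⟩
  have hvw : v ∈ permPoly w := h ▸ hself v
  have hwv : w ∈ permPoly v := h ▸ hself w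
  have a1 := dot_le_of_mem w w v hw hw hvw
  have a2 := dot_le_of_mem v v w hv hv hwv
  have a3 := dot_le_of_mem v w v hv hw hvw
  have a4 := dot_le_of_mem w v w hw hv hwv
  have hz : ∑ i, (v i - w i) ^ 2 ≤ 0 := by
    have : ∑ i, (v i - w i) ^ 2 = ∑ i, v i * v i - ∑ i, v i * w i
        - (∑ i, w i * v i - ∑ i, w i * w i) := by
      simp only [← Finset.sum_sub_distrib]
      exact Finset.sum_congr rfl fun i _ => by ring
    linarith
  have hz' := (Finset.sum_eq_zero_iff_of_nonneg (fun i _ => sq_nonneg (v i - w i))).1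
    (le_antisymm hz (Finset.sum_nonneg fun i _ => sq_nonneg _))
  funext i
  have := hz' i (Finset.mem_univ i)
  exact sub_eq_zero.1 (pow_eq_zero_iff (two_ne_zero) |>.1 this)

theorem bdiff_combVec_nonneg {n : ℕ} (y : Fin n → ℝ) (hy : ∀ k, 0 ≤ y k) (i : ℕ) (k : Fin n)
    (hik : i ≤ (k : ℕ)) : 0 ≤ bdiff (combVec y) i k := by
  have : bdiff (combVec y) i k
      = ∑ l : Fin n, y l * natBdiff (fun m => (m.choose (l : ℕ) : ℝ)) i k := by
    simp only [bdiff, combVec, natBdiff, Finset.mul_sum]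
    rw [Finset.sum_comm]
    exact Finset.sum_congr rfl fun l _ => Finset.sum_congr rfl fun j _ => by ring
  rw [this]
  refine Finset.sum_nonneg fun l _ => mul_nonneg (hy l) ?_
  rw [natBdiff_choose _ _ _ hik]
  split_ifs <;> positivity

theorem eq_combVec {n : ℕ} (v : Fin n → ℝ) : v = combVec fun k => bdiff v k k := by
  let g : ℕ → ℝ := fun m => if h : m < n then v ⟨m, h⟩ else 0
  have hb : ∀ k : Fin n, bdiff v k k = natBdiff g k k := by
    intro k
    refine Finset.sum_congr rfl fun j _ => ?_
    have : (k : ℕ) - j < n := lt_of_le_of_lt (Nat.sub_le _ _) k.isLt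
    simp [g, this]
  funext i
  have hgi : v i = g i := by simp [g]
  simp only [combVec, hb]
  rw [hgi, newton g i, Fin.sum_univ_eq_sum_range
    (fun l => natBdiff g l l * ((i : ℕ).choose l : ℝ)) n]
  refine Finset.sum_subset (fun l hl => ?_) fun l _ hl => ?_
  · simp only [Finset.mem_range] at *; omega
  · have : (i : ℕ) < l := by simp only [Finset.mem_range] at hl; omega
    simp [Nat.choose_eq_zero_of_lt this]

/-- for nondecreasing v, P_{n−1}(v) is a nonnegative Minkowski
combination ∑_{k=1}^n y_k·Π_{n−1}(k−1) iff all backward differences of v are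
nonnegative. -/
theorem permPoly_eq_minkowski_combination_iff (n : ℕ) (v : Fin n → ℝ)
    (hv : Monotone v) :
    (∃ y : Fin n → ℝ, (∀ k, 0 ≤ y k) ∧
        permPoly v = ∑ k : Fin n, y k • genPerm n ((k : ℕ) + 1))
      ↔ ∀ (i : ℕ) (k : Fin n), i ≤ (k : ℕ) → 0 ≤ bdiff v i k := by
  constructor
  · rintro ⟨y, hy, h⟩ i k hik
    rw [← permPoly_combVec y hy] at h
    rw [permPoly_inj v _ hv (combVec_monotone y hy) h]
    exact bdiff_combVec_nonneg y hy i k hik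
  · intro h
    refine ⟨fun k => bdiff v k k, fun k => h _ _ le_rfl, ?_⟩
    rw [← permPoly_combVec _ fun k => h _ _ le_rfl]
    exact congrArg permPoly (eq_combVec v)
end

section
/- For n ≥ 1 and 1 ≤ k ≤ n let v_{n−1}(k−1) ∈ ℝ^n be the vector whose j-th coordinate (0 ≤ j ≤ n−1) is the binomial coefficient C(j, k−1) (equal to 0 for j < k−1). Then for u ∈ ℝ^n, there exist nonnegative real numbers y_1, …, y_n with u = ∑_{k=1}^{n} y_k·v_{n−1}(k−1) if and only if all backward differences of u are nonnegative, i.e. Δ^i(u)_k ≥ 0 for all 0 ≤ i ≤ k ≤ n−1. -/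
open Pointwise

/-- Backward differences of a restriction are iterated forward differences. -/
lemma bdiff_eq_fwdDiff_aux {n : ℕ} (u : Fin n → ℝ) (f : ℕ → ℝ) (hf : ∀ j : Fin n, u j = f j)
    (i : ℕ) (k : Fin n) (hik : i ≤ (k : ℕ)) :
    bdiff u i k = (fwdDiff 1)^[i] f ((k : ℕ) - i) := by
  rw [fwdDiff_iter_eq_sum_shift, ← Finset.sum_range_reflect]
  unfold bdiff
  refine Finset.sum_congr rfl fun j hj => ?_
  have hj' : j ≤ i := by simpa [Nat.lt_succ_iff] using hj
  have e1 : i + 1 - 1 - j = i - j := by omega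
  have e2 : i - (i - j) = j := by omega
  have e3 : (k : ℕ) - i + (i - j) • 1 = (k : ℕ) - j := by simp only [smul_eq_mul]; omega
  rw [hf, e1, e2, e3, Nat.choose_symm hj', zsmul_eq_mul]
  push_cast
  rfl

/-- Nonnegative combinations of binomial functions have nonnegative forward differences. -/
lemma fwdDiff_iter_nonneg_aux (N i : ℕ) : ∀ (y : ℕ → ℝ), (∀ k, 0 ≤ y k) → ∀ m : ℕ,
    0 ≤ (fwdDiff 1)^[i] (fun m : ℕ => ∑ k ∈ Finset.range N, y k * (m.choose k : ℝ)) m := by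
  induction i generalizing N with
  | zero =>
    intro y hy m
    exact Finset.sum_nonneg fun k _ => mul_nonneg (hy k) (Nat.cast_nonneg _)
  | succ i ih =>
    intro y hy m
    rw [Function.iterate_succ_apply]
    have : fwdDiff 1 (fun m : ℕ => ∑ k ∈ Finset.range N, y k * (m.choose k : ℝ)) =
        fun m : ℕ => ∑ k ∈ Finset.range (N - 1), y (k + 1) * (m.choose k : ℝ) := by
      funext m
      cases N with
      | zero => simp [fwdDiff]
      | succ N =>
        simp only [fwdDiff, Finset.sum_range_succ', Nat.choose_succ_succ', Nat.add_sub_cancel,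
          Nat.choose_zero_right]
        rw [add_sub_add_right_eq_sub, ← Finset.sum_sub_distrib]
        refine Finset.sum_congr rfl fun k _ => ?_
        push_cast
        ring
    rw [this]
    exact ih (N - 1) (fun k => y (k + 1)) (fun k => hy _) m

/-- u ∈ ℝ^n is a nonnegative combination of the vectors
v_{n−1}(k−1) = (C(0,k−1),…,C(n−1,k−1)), k = 1,…,n, iff all backward
differences of u are nonnegative. -/
theorem nonneg_span_binomial_vectors_iff (n : ℕ) (hn : 1 ≤ n) (u : Fin n → ℝ) :
    (∃ y : Fin n → ℝ, (∀ k, 0 ≤ y k) ∧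
        u = ∑ k : Fin n, y k • (fun j : Fin n => (((j : ℕ).choose (k : ℕ) : ℕ) : ℝ)))
      ↔ ∀ (i : ℕ) (k : Fin n), i ≤ (k : ℕ) → 0 ≤ bdiff u i k := by
  constructor
  · rintro ⟨y, hy, hu⟩ i k hik
    let y' : ℕ → ℝ := fun k => if h : k < n then y ⟨k, h⟩ else 0
    have hy' : ∀ k, 0 ≤ y' k := by
      intro k
      by_cases h : k < n
      · simpa [y', h] using hy ⟨k, h⟩
      · simp [y', h]
    rw [bdiff_eq_fwdDiff_aux u
      (fun m : ℕ => ∑ k ∈ Finset.range n, y' k * (m.choose k : ℝ)) ?_ i k hik]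
    · exact fwdDiff_iter_nonneg_aux n i y' hy' _
    · intro j
      rw [hu, Finset.sum_apply, Finset.sum_range]
      refine Finset.sum_congr rfl fun k _ => ?_
      simp [y']
  · intro h
    let f : ℕ → ℝ := fun k => if h : k < n then u ⟨k, h⟩ else 0
    have hf : ∀ j : Fin n, u j = f j := fun j => by simp [f]
    refine ⟨fun k => (fwdDiff 1)^[(k : ℕ)] f 0, fun k => ?_, ?_⟩
    · have := h k k le_rfl
      rw [bdiff_eq_fwdDiff_aux u f hf k k le_rfl] at this
      simpa using this
    · funext j
      have hs := shift_eq_sum_fwdDiff_iter 1 f (j : ℕ) 0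
      simp only [smul_eq_mul, mul_one, zero_add] at hs
      rw [hf, hs, Finset.sum_apply]
      simp only [Pi.smul_apply, smul_eq_mul]
      rw [← Finset.sum_range
        (fun k : ℕ => (fwdDiff 1)^[k] f 0 * (((j : ℕ).choose k : ℕ) : ℝ))]
      have hsub : Finset.range ((j : ℕ) + 1) ⊆ Finset.range n :=
        Finset.range_subset_range.2 j.isLt
      rw [← Finset.sum_subset hsub]
      · refine Finset.sum_congr rfl fun k _ => ?_
        rw [nsmul_eq_mul, mul_comm]
      · intro k _ hk
        rw [Nat.choose_eq_zero_of_lt (by simpa [Nat.lt_succ_iff] using hk)]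
        simp
end

section
/- Let n ≥ 1 and v ∈ ℝ^n. The dimension of P_{n−1}(v) (the dimension of its affine span) equals 0 if all coordinates of v are equal, and equals n−1 otherwise. In particular, for 2 ≤ k ≤ n the general permutahedron Π_{n−1}(k−1) has dimension n−1. -/
open Pointwise

lemma aux_finrank (n : ℕ) (hn : 1 ≤ n) (D : Submodule ℝ (Fin n → ℝ))
    (h1 : ∀ x ∈ D, ∑ i, x i = 0)
    (h2 : ∀ i j : Fin n, i ≠ j → (Pi.single i 1 - Pi.single j 1 : Fin n → ℝ) ∈ D) :
    Module.finrank ℝ D = n - 1 := by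
  let L : (Fin n → ℝ) →ₗ[ℝ] ℝ := ∑ i, LinearMap.proj i
  have hL : ∀ x, L x = ∑ i, x i := fun x => by simp [L]
  have hD : D = LinearMap.ker L := by
    apply le_antisymm
    · intro x hx
      rw [LinearMap.mem_ker, hL]
      exact h1 x hx
    · intro x hx
      rw [LinearMap.mem_ker, hL] at hx
      let z : Fin n := ⟨0, hn⟩
      have hx' : x = ∑ i, x i • (Pi.single i 1 - Pi.single z 1 : Fin n → ℝ) := by
        simp only [smul_sub, Finset.sum_sub_distrib, ← Finset.sum_smul, hx, zero_smul, sub_zero]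
        exact pi_eq_sum_univ' x
      rw [hx']
      refine Submodule.sum_mem _ fun i _ => Submodule.smul_mem _ _ ?_
      by_cases h : i = z
      · rw [h, sub_self]
        exact D.zero_mem
      · exact h2 i z h
  have hs : Function.Surjective L := by
    intro c
    refine ⟨Pi.single ⟨0, hn⟩ c, ?_⟩
    rw [hL]
    simp
  have h3 := LinearMap.finrank_range_add_finrank_ker L
  rw [LinearMap.range_eq_top.2 hs, finrank_top, Module.finrank_self, Module.finrank_fin_fun] at h3
  rw [hD]
  omega

lemma aux_setDim (n : ℕ) (hn : 1 ≤ n) (S : Set (Fin n → ℝ)) (c : ℝ)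
    (h1 : ∀ x ∈ S, ∑ i, x i = c)
    (h2 : ∀ i j : Fin n, i ≠ j → ∃ x ∈ S, ∃ y ∈ S, ∃ r : ℝ, r ≠ 0 ∧
      x - y = r • (Pi.single i 1 - Pi.single j 1 : Fin n → ℝ)) :
    setDim S = n - 1 := by
  apply aux_finrank n hn
  · intro x hx
    rw [direction_affineSpan, vectorSpan_def] at hx
    induction hx using Submodule.span_induction with
    | mem x hx =>
      obtain ⟨a, ha, b, hb, rfl⟩ := hx
      simp [Finset.sum_sub_distrib, h1 a ha, h1 b hb]
    | zero => simp
    | add x y _ _ hx hy => simp [Finset.sum_add_distrib, hx, hy]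
    | smul a x _ hx => simp [← Finset.mul_sum, hx]
  · intro i j hij
    obtain ⟨x, hx, y, hy, r, hr, h⟩ := h2 i j hij
    have := AffineSubspace.vsub_mem_direction (mem_affineSpan ℝ hx) (mem_affineSpan ℝ hy)
    rw [vsub_eq_sub, h] at this
    exact (Submodule.smul_mem_iff _ hr).1 this

lemma aux_perm {n : ℕ} (i j a b : Fin n) (hij : i ≠ j) (hab : a ≠ b) :
    ∃ σ : Equiv.Perm (Fin n), σ i = a ∧ σ j = b := by
  refine ⟨(Equiv.swap i a).trans (Equiv.swap (Equiv.swap i a j) b), ?_, ?_⟩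
  · simp only [Equiv.trans_apply, Equiv.swap_apply_left]
    apply Equiv.swap_apply_of_ne_of_ne _ hab
    intro h
    apply hij
    apply (Equiv.swap i a).injective
    rw [← h, Equiv.swap_apply_left]
  · simp

lemma aux_permPoly_sum {n : ℕ} (v x : Fin n → ℝ) (hx : x ∈ permPoly v) :
    ∑ i, x i = ∑ i, v i := by
  have hc : Convex ℝ {x : Fin n → ℝ | ∑ i, x i = ∑ i, v i} := by
    intro x hx y hy a b _ _ hab
    simp only [Set.mem_setOf_eq] at *
    simp only [Pi.add_apply, Pi.smul_apply, smul_eq_mul, Finset.sum_add_distrib, ← Finset.mul_sum,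
      hx, hy, ← add_mul, hab, one_mul]
  refine convexHull_min ?_ hc hx
  rintro _ ⟨σ, rfl⟩
  exact Equiv.sum_comp σ v

/-- P_{n−1}(v) has dimension 0 if v is constant, and n−1
otherwise; in particular Π_{n−1}(k−1) has dimension n−1 for 2 ≤ k ≤ n. -/
theorem dim_permPoly (n : ℕ) (hn : 1 ≤ n) (v : Fin n → ℝ) :
    (setDim (permPoly v) = if ∀ i j : Fin n, v i = v j then 0 else n - 1) ∧
    (∀ k : ℕ, 2 ≤ k → k ≤ n → setDim (genPerm n k) = n - 1) := by
  constructor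
  · split_ifs with h
    · have : {w | ∃ σ : Equiv.Perm (Fin n), w = v ∘ σ} = {v} := by
        ext w
        simp only [Set.mem_setOf_eq, Set.mem_singleton_iff]
        constructor
        · rintro ⟨σ, rfl⟩
          funext i
          exact h _ _
        · rintro rfl
          exact ⟨1, rfl⟩
      rw [setDim, permPoly, this, convexHull_singleton, direction_affineSpan,
        vectorSpan_singleton, finrank_bot]
    · push Not at h
      obtain ⟨a, b, hab⟩ := h
      refine aux_setDim n hn _ _ (aux_permPoly_sum v) fun i j hij => ?_
      obtain ⟨σ, rfl, rfl⟩ := aux_perm i j a b hij (fun h => hab (by rw [h]))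
      refine ⟨v ∘ σ, subset_convexHull ℝ _ ⟨σ, rfl⟩,
        v ∘ ((Equiv.swap i j).trans σ : Equiv.Perm (Fin n)), subset_convexHull ℝ _ ⟨_, rfl⟩,
        v (σ i) - v (σ j), sub_ne_zero.2 hab, ?_⟩
      funext l
      by_cases hi : l = i
      · subst hi
        simp [hij]
      · by_cases hj : l = j
        · subst hj
          simp [hi]
        · simp [hi, hj, Equiv.swap_apply_of_ne_of_ne hi hj]
  · intro k hk hkn
    have hsum : ∀ x ∈ genPerm n k, ∑ i, x i =
        ((Finset.univ : Finset (Fin n)).powersetCard k).card := by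
      intro x hx
      obtain ⟨g, hg, rfl⟩ := (Set.mem_finset_sum _ _ _).1 hx
      simp only [Finset.sum_apply]
      rw [Finset.sum_comm, Finset.sum_congr rfl (fun F hF => (hg hF).2.2)]
      simp
    refine aux_setDim n hn _ _ hsum fun i j hij => ?_
    have hs : ∀ (F : Finset (Fin n)) (l : Fin n), l ∈ F →
        (Pi.single l 1 : Fin n → ℝ) ∈ stdSimplexOn n F := by
      intro F l hl
      refine ⟨fun m => ?_, fun m hm => ?_, by simp⟩
      · by_cases h : m = l
        · subst h; simp
        · simp [h]
      · have : m ≠ l := fun h => hm (h ▸ hl)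
        simp [this]
    obtain ⟨F₀, hF₀, -, hc⟩ := Finset.exists_subsuperset_card_eq (n := k)
      (Finset.subset_univ ({i, j} : Finset (Fin n)))
      (by rw [Finset.card_pair hij]; exact hk) (by simpa using hkn)
    have hne : ∀ F : Finset (Fin n), ∃ l, F ∈ Finset.univ.powersetCard k → l ∈ F := by
      intro F
      by_cases h : F.Nonempty
      · exact ⟨_, fun _ => h.choose_spec⟩
      · refine ⟨i, fun hF => ?_⟩
        rw [Finset.not_nonempty_iff_eq_empty] at h
        subst h
        simp at hF
        omega
    choose f hf using hne
    have hmem : ∀ l ∈ F₀, ∑ F ∈ (Finset.univ : Finset (Fin n)).powersetCard k,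
        (Pi.single (Function.update f F₀ l F) 1 : Fin n → ℝ) ∈ genPerm n k := by
      intro l hl
      refine (Set.mem_finset_sum _ _ _).2 ⟨_, fun {F} hF => ?_, rfl⟩
      apply hs
      by_cases h : F = F₀
      · subst h; simpa using hl
      · simpa [h] using hf F hF
    refine ⟨_, hmem i (hF₀ (by simp)), _, hmem j (hF₀ (by simp)), 1, one_ne_zero, ?_⟩
    rw [← Finset.sum_sub_distrib, Finset.sum_eq_single F₀]
    · simp
    · intro F _ h
      simp [h]
    · intro h
      simp [hc] at h
end

section
/- Let v ∈ ℝ^n and let X_1, …, X_h be pairwise disjoint nonempty subsets of {0,…,n−1}. Let G be the set of permutations σ of {0,…,n−1} such that σ(X_i) = X_i for each i and σ fixes every element outside X_1 ∪ ⋯ ∪ X_h. Then the dimension of the convex hull of {v∘σ : σ ∈ G} equals ∑_{i=1}^{h} δ_{X_i}(v)·(|X_i| − 1), where δ_X(v) = 0 if v is constant on X and δ_X(v) = 1 otherwise. -/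
open Pointwise

/-- for pairwise disjoint nonempty X_1,…,X_h ⊆ {0,…,n−1} and the
group G of permutations stabilizing each X_i and fixing everything outside
their union, the dimension of conv{v∘σ : σ ∈ G} is
∑_i δ_{X_i}(v)·(|X_i|−1). -/
theorem dim_convexHull_orbit_young_subgroup (n h : ℕ) (v : Fin n → ℝ)
    (X : Fin h → Finset (Fin n)) (hne : ∀ i, (X i).Nonempty)
    (hdisj : ∀ i j, i ≠ j → Disjoint (X i) (X j)) :
    setDim (convexHull ℝ {w : Fin n → ℝ | ∃ σ : Equiv.Perm (Fin n),
        (∀ i, (X i).image σ = X i) ∧ (∀ x : Fin n, (∀ i, x ∉ X i) → σ x = x) ∧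
        w = v ∘ σ})
      = ∑ i : Fin h,
          (if ∀ a ∈ X i, ∀ b ∈ X i, v a = v b then 0 else 1) * ((X i).card - 1) := by
  classical
  have huniq : ∀ i j y, y ∈ X i → y ∈ X j → i = j := by
    intro i j y hi hj
    by_contra hij
    exact Finset.disjoint_left.mp (hdisj i j hij) hi hj
  choose s hs using hne
  obtain ⟨b, hb1, hb2⟩ : ∃ b : Fin n → Fin n, (∀ i, ∀ y ∈ X i, b y = s i) ∧
      (∀ y, (∀ i, y ∉ X i) → b y = y) := by
    refine ⟨fun y => if hy : ∃ i, y ∈ X i then s hy.choose else y, ?_, ?_⟩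
    · intro i y hy
      have hex : ∃ i, y ∈ X i := ⟨i, hy⟩
      simp only [hex, dite_true]
      rw [huniq _ _ y hex.choose_spec hy]
    · intro y hy
      have hex : ¬ ∃ i, y ∈ X i := by simpa using hy
      simp only [hex, dite_false]
  set A : Finset (Fin h) := Finset.univ.filter
    (fun i => ¬ ∀ a ∈ X i, ∀ b ∈ X i, v a = v b) with hA
  set J : Finset (Fin n) := A.biUnion (fun i => (X i).erase (s i)) with hJ
  have hJcard : J.card = ∑ i : Fin h,
      (if ∀ a ∈ X i, ∀ b ∈ X i, v a = v b then 0 else 1) * ((X i).card - 1) := by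
    rw [hJ, Finset.card_biUnion, hA, Finset.sum_filter]
    · refine Finset.sum_congr rfl fun i _ => ?_
      rw [Finset.card_erase_of_mem (hs i)]
      by_cases hc : ∀ a ∈ X i, ∀ b ∈ X i, v a = v b
      · rw [if_pos hc, if_neg (not_not.mpr hc), zero_mul]
      · rw [if_neg hc, if_pos hc, one_mul]
    · intro i _ j _ hij
      exact (hdisj i j hij).mono (Finset.erase_subset _ _) (Finset.erase_subset _ _)
  set e : Fin n → (Fin n → ℝ) := fun x => Pi.single x (1 : ℝ) with he
  set u : J → (Fin n → ℝ) := fun x => e x - e (b x) with hu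
  have hbJ : ∀ x ∈ J, b x ∉ J := by
    intro x hx hbx
    simp only [hJ, Finset.mem_biUnion, Finset.mem_erase] at hx hbx
    obtain ⟨i, hi, hxs, hxi⟩ := hx
    obtain ⟨j, hj, hxj, hxj'⟩ := hbx
    rw [hb1 i x hxi] at hxj hxj'
    have := huniq _ _ _ (hs i) hxj'
    subst this
    exact hxj rfl
  have hli : LinearIndependent ℝ u := by
    rw [Fintype.linearIndependent_iff]
    intro g hg x
    have h1 := congrFun hg x.1
    rw [Finset.sum_apply, Finset.sum_eq_single x] at h1
    · have : x.1 ≠ b x.1 := fun hh => hbJ x.1 x.2 (hh ▸ x.2)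
      simpa [hu, he, Pi.single_apply, this] using h1
    · intro y _ hyx
      have h2 : x.1 ≠ b y.1 := fun hh => hbJ y.1 y.2 (hh ▸ x.2)
      have h3 : x.1 ≠ y.1 := fun hh => hyx (Subtype.ext hh.symm)
      simp [hu, he, h2, h3]
    · simp
  have hspan : (affineSpan ℝ (convexHull ℝ {w : Fin n → ℝ | ∃ σ : Equiv.Perm (Fin n),
        (∀ i, (X i).image σ = X i) ∧ (∀ x : Fin n, (∀ i, x ∉ X i) → σ x = x) ∧
        w = v ∘ σ})).direction = Submodule.span ℝ (Set.range u) := by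
    rw [affineSpan_convexHull, direction_affineSpan]
    set S := {w : Fin n → ℝ | ∃ σ : Equiv.Perm (Fin n),
        (∀ i, (X i).image σ = X i) ∧ (∀ x : Fin n, (∀ i, x ∉ X i) → σ x = x) ∧
        w = v ∘ σ} with hS
    have hvS : v ∈ S := ⟨1, by simp, by simp, by simp⟩
    apply le_antisymm
    · rw [vectorSpan_eq_span_vsub_set_right ℝ hvS, Submodule.span_le]
      rintro _ ⟨w, ⟨σ, hσ1, hσ2, rfl⟩, rfl⟩
      have hσX : ∀ i, ∀ y ∈ X i, σ y ∈ X i := by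
        intro i y hy
        have := Finset.mem_image_of_mem σ hy
        rwa [hσ1 i] at this
      have hbσ : ∀ y, b (σ y) = b y := by
        intro y
        by_cases hy : ∃ i, y ∈ X i
        · obtain ⟨i, hi⟩ := hy
          rw [hb1 i y hi, hb1 i _ (hσX i y hi)]
        · rw [hσ2 y (by simpa using hy)]
      have hzero : ∑ y, (v (σ y) - v y) • e (b y) = 0 := by
        have : ∑ y, v (σ y) • e (b (σ y)) = ∑ y, v y • e (b y) :=
          Equiv.sum_comp σ (fun y => v y • e (b y))
        simp only [hbσ] at this
        simp only [sub_smul, Finset.sum_sub_distrib, this, sub_self]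
      have hw : v ∘ σ - v = ∑ y, (v (σ y) - v y) • (e y - e (b y)) := by
        simp only [smul_sub, Finset.sum_sub_distrib] at hzero ⊢
        rw [hzero, sub_zero]
        ext z
        simp [he, Finset.sum_apply, Pi.single_apply]
      change v ∘ σ - v ∈ Submodule.span ℝ (Set.range u)
      rw [hw]
      refine Submodule.sum_mem _ fun y _ => ?_
      by_cases hyJ : y ∈ J
      · exact Submodule.smul_mem _ _ (Submodule.subset_span ⟨⟨y, hyJ⟩, rfl⟩)
      · by_cases hyb : b y = y
        · simp [hyb]
        · have hy : ∃ i, y ∈ X i := by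
            by_contra hy
            exact hyb (hb2 y (by simpa using hy))
          obtain ⟨i, hi⟩ := hy
          have hc : ∀ a ∈ X i, ∀ b ∈ X i, v a = v b := by
            by_contra hc
            apply hyJ
            simp only [hJ, Finset.mem_biUnion, Finset.mem_erase]
            refine ⟨i, by simp only [hA, Finset.mem_filter]; exact ⟨Finset.mem_univ _, hc⟩, ?_, hi⟩
            intro hh
            exact hyb ((hb1 i y hi).trans hh.symm)
          rw [hc _ (hσX i y hi) _ hi]
          simp
    · rw [Submodule.span_le]
      have key : ∀ i, ∀ a ∈ X i, ∀ c ∈ X i, v a ≠ v c → e a - e c ∈ vectorSpan ℝ S := by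
        intro i a ha c hc hac
        have hmem : v ∘ (Equiv.swap a c) ∈ S := by
          refine ⟨Equiv.swap a c, ?_, ?_, rfl⟩
          · intro j
            apply Finset.eq_of_subset_of_card_le
            · intro z hz
              obtain ⟨y, hy, rfl⟩ := Finset.mem_image.mp hz
              rw [Equiv.swap_apply_def]
              split_ifs with h1 h2
              · subst h1; rwa [← huniq _ _ _ ha hy]
              · subst h2; rwa [← huniq _ _ _ hc hy]
              · exact hy
            · rw [Finset.card_image_of_injective _ (Equiv.injective _)]
          · intro x hx
            refine Equiv.swap_apply_of_ne_of_ne ?_ ?_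
            · rintro rfl; exact hx i ha
            · rintro rfl; exact hx i hc
        have h1 := vsub_mem_vectorSpan ℝ hmem hvS
        have h2 : e a - e c = (v c - v a)⁻¹ • (v ∘ (Equiv.swap a c) -ᵥ v) := by
          have h3 : v c - v a ≠ 0 := sub_ne_zero.mpr hac.symm
          have hne : a ≠ c := fun hh => hac (by rw [hh])
          ext z
          simp only [he, Pi.sub_apply, Pi.single_apply, Pi.smul_apply, vsub_eq_sub,
            Function.comp, Equiv.swap_apply_def, smul_eq_mul]
          split_ifs with h5 h6 h7
          · exact absurd (h5.symm.trans h6) hne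
          · subst h5; field_simp; simp
          · subst h7; field_simp; ring
          · simp
        rw [h2]
        exact Submodule.smul_mem _ _ h1
      rintro _ ⟨⟨x, hx⟩, rfl⟩
      simp only [hJ, Finset.mem_biUnion, Finset.mem_erase, hA, Finset.mem_filter] at hx
      obtain ⟨i, ⟨_, hi⟩, hxs, hxi⟩ := hx
      change e x - e (b x) ∈ vectorSpan ℝ S
      rw [hb1 i x hxi]
      by_cases hv : v x = v (s i)
      · obtain ⟨c, hc, hcx⟩ : ∃ c ∈ X i, v c ≠ v x := by
          by_contra! hcon
          exact hi fun a ha b hb => (hcon a ha).trans (hcon b hb).symm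
        have := Submodule.add_mem _ (key i x hxi c hc hcx.symm)
          (key i c hc (s i) (hs i) (hv ▸ hcx))
        simpa using this
      · exact key i x hxi _ (hs i) hv
  unfold setDim
  rw [hspan, finrank_span_eq_card hli, ← hJcard]
  simp
end

section
/- Let v, c ∈ ℝ^n and let P = P_{n−1}(v). Then {x ∈ P : ∀ y ∈ P, c·y ≤ c·x} equals the convex hull of {v∘σ : σ a permutation of {0,…,n−1} such that for all i, j, c_i < c_j implies (v∘σ)_i ≤ (v∘σ)_j}, where c·x = ∑_{i=0}^{n−1} c_i x_i. -/
open Pointwise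

theorem face_aux {E : Type*} [AddCommGroup E] [Module ℝ E] (L : E →ₗ[ℝ] ℝ) (S T : Set E) (M : ℝ)
    (hle : ∀ s ∈ S, L s ≤ M) (hT : ∀ s ∈ S, L s = M → s ∈ T) (x : E) (hx : x ∈ convexHull ℝ S) :
    L x ≤ M ∧ (L x = M → x ∈ convexHull ℝ T) := by
  have key : convexHull ℝ S ⊆ {x | L x ≤ M ∧ (L x = M → x ∈ convexHull ℝ T)} := by
    refine convexHull_min (fun s hs => ⟨hle s hs, fun h => subset_convexHull ℝ T (hT s hs h)⟩) ?_
    rintro x ⟨hx, hx'⟩ y ⟨hy, hy'⟩ a b ha hb hab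
    have e : L (a • x + b • y) = a * L x + b * L y := by simp
    refine ⟨?_, ?_⟩
    · rw [e]
      have hM : M = a * M + b * M := by rw [← add_mul, hab, one_mul]
      have h1 := mul_le_mul_of_nonneg_left hx ha
      have h2 := mul_le_mul_of_nonneg_left hy hb
      linarith
    · intro h
      rw [e] at h
      rcases ha.eq_or_lt with rfl | ha0
      · obtain rfl : b = 1 := by linarith
        simp only [zero_smul, one_smul, zero_add]
        exact hy' (by linarith)
      rcases hb.eq_or_lt with rfl | hb0
      · obtain rfl : a = 1 := by linarith
        simp only [zero_smul, one_smul, add_zero]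
        exact hx' (by linarith)
      have hM : M = a * M + b * M := by rw [← add_mul, hab, one_mul]
      have h1 := mul_le_mul_of_nonneg_left hx ha
      have h2 := mul_le_mul_of_nonneg_left hy hb
      have ex : L x = M := mul_left_cancel₀ ha0.ne' (by linarith)
      have ey : L y = M := mul_left_cancel₀ hb0.ne' (by linarith)
      exact convex_convexHull ℝ T (hx' ex) (hy' ey) ha hb hab
  exact key hx

theorem exists_monovary_perm {n : ℕ} (v c : Fin n → ℝ) :
    ∃ τ : Equiv.Perm (Fin n), Monovary (v ∘ τ) c := by
  refine ⟨(Tuple.sort c).symm.trans (Tuple.sort v), fun i j hij => ?_⟩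
  have hc := Tuple.monotone_sort c
  have hv := Tuple.monotone_sort v
  have h : (Tuple.sort c).symm i ≤ (Tuple.sort c).symm j := by
    by_contra hlt
    have := hc (not_le.1 hlt).le
    simp at this
    linarith
  exact hv h

/-- the exposed face of P_{n−1}(v) determined by c is the convex
hull of the orbit points v∘σ whose coordinate order agrees with that of c. -/
theorem face_permPoly_eq_convexHull (n : ℕ) (v c : Fin n → ℝ) :
    {x ∈ permPoly v | ∀ y ∈ permPoly v, ∑ i, c i * y i ≤ ∑ i, c i * x i}
      = convexHull ℝ {w : Fin n → ℝ | ∃ σ : Equiv.Perm (Fin n),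
          w = v ∘ σ ∧ ∀ i j : Fin n, c i < c j → w i ≤ w j} := by
  classical
  obtain ⟨τ, hτ⟩ := exists_monovary_perm v c
  set S : Set (Fin n → ℝ) := {w | ∃ σ : Equiv.Perm (Fin n), w = v ∘ σ} with hS
  set T : Set (Fin n → ℝ) := {w : Fin n → ℝ | ∃ σ : Equiv.Perm (Fin n),
          w = v ∘ σ ∧ ∀ i j : Fin n, c i < c j → w i ≤ w j} with hTdef
  set M : ℝ := ∑ i, c i * v (τ i) with hMdef
  let L : (Fin n → ℝ) →ₗ[ℝ] ℝ := ∑ i, c i • LinearMap.proj i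
  have hL : ∀ x, L x = ∑ i, c i * x i := fun x => by simp [L]
  have hconv : ∀ σ : Equiv.Perm (Fin n),
      v ∘ σ = (v ∘ τ) ∘ (σ.trans τ.symm : Equiv.Perm (Fin n)) := fun σ => by
    ext i; simp
  have hle : ∀ s ∈ S, L s ≤ M := by
    rintro _ ⟨σ, rfl⟩
    rw [hL, hconv]
    exact hτ.symm.sum_smul_comp_perm_le_sum_smul
  have hiff : ∀ σ : Equiv.Perm (Fin n), L (v ∘ σ) = M ↔ Monovary (v ∘ σ) c := by
    intro σ
    rw [hL, hconv, monovary_comm]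
    exact hτ.symm.sum_smul_comp_perm_eq_sum_smul_iff
  have hST : ∀ s ∈ S, L s = M → s ∈ T := by
    rintro _ ⟨σ, rfl⟩ h
    exact ⟨σ, rfl, fun i j hij => (hiff σ).1 h hij⟩
  have hmain := face_aux L S T M hle hST
  have hTS : T ⊆ S := fun w ⟨σ, h, _⟩ => ⟨σ, h⟩
  apply Set.Subset.antisymm
  · rintro x ⟨hx, hmax⟩
    refine (hmain x hx).2 (le_antisymm (hmain x hx).1 ?_)
    rw [hL]
    exact hmax (v ∘ τ) (subset_convexHull ℝ S ⟨τ, rfl⟩)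
  · intro x hx
    refine ⟨convexHull_mono hTS hx, fun y hy => ?_⟩
    have hxM : M ≤ L x := by
      have hsub : convexHull ℝ T ⊆ {x | M ≤ L x} := by
        refine convexHull_min ?_ (convex_halfSpace_ge L.isLinear M)
        rintro _ ⟨σ, rfl, h⟩
        exact ((hiff σ).2 fun i j hij => h i j hij).ge
      exact hsub hx
    rw [← hL, ← hL]
    exact (hmain y hy).1.trans hxM
end

section
/- Let v, c ∈ ℝ^n satisfy: for all i, j, c_i < c_j implies v_i ≤ v_j. Let P = P_{n−1}(v) and F = {x ∈ P : ∀ y ∈ P, c·y ≤ c·x}, where c·x = ∑_{i=0}^{n−1} c_i x_i. Then F equals the convex hull of {v∘μ : μ a permutation of {0,…,n−1} with c∘μ = c}, and the dimension of F equals the sum, over the distinct values t of c, of δ_{X_t}(v)·(|X_t| − 1), where X_t = {i : c_i = t} and δ_X(v) = 0 if v is constant on X and δ_X(v) = 1 otherwise. -/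
open Pointwise

lemma aux_perm_s12 {n : ℕ} (v c : Fin n → ℝ) (hv : Monovary v c) (σ : Equiv.Perm (Fin n))
    (hw : Monovary (v ∘ σ) c) : ∃ μ : Equiv.Perm (Fin n), c ∘ μ = c ∧ v ∘ σ = v ∘ μ := by
  have key : ∀ w : Fin n → ℝ, Monovary w c → ∃ a : Equiv.Perm (Fin n),
      Monotone (c ∘ a) ∧ Monotone (w ∘ a) := by
    intro w hw
    let f : Fin n → ℝ ×ₗ ℝ := fun i => toLex (c i, w i)
    have hm : Monotone (f ∘ Tuple.sort f) := Tuple.monotone_sort f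
    refine ⟨Tuple.sort f, ?_, ?_⟩
    · intro i j hij
      have := hm hij
      simp only [Function.comp, f, Prod.Lex.toLex_le_toLex] at this ⊢
      rcases this with h | h
      · exact h.le
      · exact h.1.le
    · intro i j hij
      have := hm hij
      simp only [Function.comp, f, Prod.Lex.toLex_le_toLex] at this ⊢
      rcases this with h | h
      · exact hw h
      · exact h.2
  obtain ⟨a, ha1, ha2⟩ := key v hv
  obtain ⟨b, hb1, hb2⟩ := key _ hw
  have h1 : c ∘ a = c ∘ b := Tuple.unique_monotone ha1 hb1
  have h2 : v ∘ a = v ∘ (b.trans σ) := Tuple.unique_monotone ha2 hb2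
  refine ⟨b.symm.trans a, ?_, ?_⟩
  · funext i
    have := congrFun h1 (b.symm i)
    simpa using this
  · funext i
    have := congrFun h2 (b.symm i)
    simpa using this.symm

lemma aux_face {n : ℕ} (v c : Fin n → ℝ) (hv : Monovary v c) :
    {x ∈ permPoly v | ∀ y ∈ permPoly v, ∑ i, c i * y i ≤ ∑ i, c i * x i}
      = convexHull ℝ {w : Fin n → ℝ | ∃ μ : Equiv.Perm (Fin n),
          c ∘ μ = c ∧ w = v ∘ μ} := by
  let L : (Fin n → ℝ) →ₗ[ℝ] ℝ := ∑ i, c i • LinearMap.proj i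
  have hL : ∀ x, ∑ i, c i * x i = L x := by intro x; simp [L]
  simp only [hL]
  have hle : ∀ y ∈ permPoly v, L y ≤ L v := by
    have : permPoly v ⊆ {y | L y ≤ L v} := by
      apply convexHull_min
      · rintro _ ⟨σ, rfl⟩
        have := hv.sum_comp_perm_mul_le_sum_mul (σ := σ)
        simp only [Set.mem_setOf_eq, ← hL]
        simpa [mul_comm] using this
      · exact convex_halfSpace_le L.isLinear _
    exact this
  have hvmem : v ∈ permPoly v := subset_convexHull ℝ _ ⟨1, by simp⟩
  apply Set.Subset.antisymm
  · rintro x ⟨hx, hmax⟩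
    have hxe : L x = L v := le_antisymm (hle x hx) (hmax v hvmem)
    unfold permPoly at hx
    rw [convexHull_eq] at hx
    obtain ⟨ι, t, w, z, hw0, hw1, hz, rfl⟩ := hx
    have hzP : ∀ i ∈ t, L (z i) ≤ L v := fun i hi => hle _ (subset_convexHull ℝ _ (hz i hi))
    have hsum : ∑ i ∈ t, w i * (L v - L (z i)) = 0 := by
      rw [Finset.centerMass_eq_of_sum_1 _ _ hw1, map_sum] at hxe
      simp only [map_smul, smul_eq_mul] at hxe
      simp only [mul_sub, Finset.sum_sub_distrib, ← Finset.sum_mul, hw1, hxe]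
      ring
    rw [Finset.sum_eq_zero_iff_of_nonneg
      (fun i hi => mul_nonneg (hw0 i hi) (sub_nonneg.2 (hzP i hi)))] at hsum
    rw [← Finset.centerMass_filter_ne_zero z]
    apply Finset.centerMass_mem_convexHull
    · intro i hi
      exact hw0 i (Finset.mem_filter.1 hi).1
    · rw [Finset.sum_filter_ne_zero, hw1]; norm_num
    · intro i hi
      obtain ⟨hi, hwi⟩ := Finset.mem_filter.1 hi
      have h0 : L (z i) = L v := by
        rcases mul_eq_zero.1 (hsum i hi) with h | h
        · exact absurd h hwi
        · linarith
      obtain ⟨σ, hσ⟩ := hz i hi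
      rw [hσ, ← hL, ← hL] at h0
      have hm : Monovary (v ∘ σ) c := by
        rw [← hv.sum_comp_perm_mul_eq_sum_mul_iff]
        simpa [mul_comm] using h0
      obtain ⟨μ, h1, h2⟩ := aux_perm_s12 v c hv σ hm
      exact ⟨μ, h1, hσ.trans h2⟩
  · intro x hx
    have h1 : x ∈ permPoly v := by
      refine convexHull_mono ?_ hx
      rintro _ ⟨μ, _, rfl⟩
      exact ⟨μ, rfl⟩
    have h2 : convexHull ℝ {w : Fin n → ℝ | ∃ μ : Equiv.Perm (Fin n),
          c ∘ μ = c ∧ w = v ∘ μ} ⊆ {y | L v ≤ L y} := by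
      apply convexHull_min
      · rintro _ ⟨μ, hμ, rfl⟩
        simp only [Set.mem_setOf_eq, ← hL]
        apply le_of_eq
        rw [← Equiv.sum_comp μ]
        refine Finset.sum_congr rfl fun i _ => ?_
        have := congrFun hμ i
        simp only [Function.comp] at this ⊢
        rw [this]
      · exact convex_halfSpace_ge L.isLinear _
    exact ⟨h1, fun y hy => (hle y hy).trans (h2 hx)⟩

lemma aux_dim {n : ℕ} (v c : Fin n → ℝ) :
    setDim (convexHull ℝ {w : Fin n → ℝ | ∃ μ : Equiv.Perm (Fin n),
          c ∘ μ = c ∧ w = v ∘ μ})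
      = ∑ t ∈ Finset.univ.image c,
          (if ∀ a ∈ Finset.univ.filter (fun i => c i = t),
              ∀ b ∈ Finset.univ.filter (fun i => c i = t), v a = v b then 0 else 1)
            * ((Finset.univ.filter (fun i => c i = t)).card - 1) := by
  classical
  obtain ⟨r, hr1, hr2⟩ : ∃ r : Fin n → Fin n, (∀ i, c (r i) = c i) ∧
      ∀ i j, c i = c j → r i = r j := by
    refine ⟨fun i => Classical.choose (⟨i, rfl⟩ : ∃ j, c j = c i), fun i =>
      Classical.choose_spec (⟨i, rfl⟩ : ∃ j, c j = c i), ?_⟩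
    intro i j h
    simp only [h]
  have hrr : ∀ i, r (r i) = r i := fun i => hr2 _ _ (hr1 i)
  let N : ℝ → Prop := fun t => ∃ a b, c a = t ∧ c b = t ∧ v a ≠ v b
  let I : Finset (Fin n) := Finset.univ.filter (fun i => N (c i) ∧ r i ≠ i)
  let e : Fin n → (Fin n → ℝ) := fun i => Pi.single i 1
  let b : I → (Fin n → ℝ) := fun i => e i - e (r i)
  have hli : LinearIndependent ℝ b := by
    rw [Fintype.linearIndependent_iff]
    intro g hg k
    have := congrFun hg k.1
    rw [Finset.sum_apply] at this
    rw [Finset.sum_eq_single k] at this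
    · have hk := (Finset.mem_filter.1 k.2).2.2
      simpa [b, e, Pi.single_apply, hk.symm] using this
    · intro j _ hjk
      have h1 : (k : Fin n) ≠ j := fun h => hjk (Subtype.ext h.symm)
      have h2 : (k : Fin n) ≠ r j := by
        intro h
        apply (Finset.mem_filter.1 k.2).2.2
        rw [h, hrr]
      simp [b, e, Pi.single_apply, h1, h2]
    · simp
  have hself : v ∈ {w : Fin n → ℝ | ∃ μ : Equiv.Perm (Fin n), c ∘ μ = c ∧ w = v ∘ μ} :=
    ⟨1, by simp, by simp⟩
  have hspan : vectorSpan ℝ {w : Fin n → ℝ | ∃ μ : Equiv.Perm (Fin n),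
      c ∘ μ = c ∧ w = v ∘ μ} = Submodule.span ℝ (Set.range b) := by
    apply le_antisymm
    · rw [vectorSpan_eq_span_vsub_set_right ℝ hself, Submodule.span_le]
      rintro _ ⟨_, ⟨μ, hμ, rfl⟩, rfl⟩
      have hz : ∑ i, (v (μ i) - v i) • e (r i) = 0 := by
        simp only [sub_smul, Finset.sum_sub_distrib]
        rw [sub_eq_zero, ← Equiv.sum_comp μ (fun i => v i • e (r i))]
        refine Finset.sum_congr rfl fun i _ => ?_
        rw [hr2 (μ i) i (congrFun hμ i)]
      have hd : v ∘ μ -ᵥ v = ∑ i, (v (μ i) - v i) • (e i - e (r i)) := by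
        simp only [smul_sub, Finset.sum_sub_distrib]
        rw [hz]
        funext k
        simp [e, Finset.sum_apply, Pi.single_apply]
      simp only [hd]
      refine Submodule.sum_mem _ fun i _ => ?_
      by_cases hi : i ∈ I
      · exact Submodule.smul_mem _ _ (Submodule.subset_span ⟨⟨i, hi⟩, rfl⟩)
      · simp only [I, Finset.mem_filter, Finset.mem_univ, true_and, not_and_or, not_not] at hi
        rcases hi with hi | hi
        · have : v (μ i) = v i := by
            by_contra h
            exact hi ⟨μ i, i, congrFun hμ i, rfl, h⟩
          simp [this]
        · simp [hi]
    · rw [Submodule.span_le]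
      have hsw : ∀ i j, c i = c j → v i ≠ v j → e i - e j ∈ vectorSpan ℝ
          {w : Fin n → ℝ | ∃ μ : Equiv.Perm (Fin n), c ∘ μ = c ∧ w = v ∘ μ} := by
        intro i j hc hv
        have hij : i ≠ j := fun h => hv (by rw [h])
        have hm : v ∘ Equiv.swap i j ∈ {w : Fin n → ℝ | ∃ μ : Equiv.Perm (Fin n),
            c ∘ μ = c ∧ w = v ∘ μ} := by
          refine ⟨Equiv.swap i j, ?_, rfl⟩
          funext k
          simp only [Function.comp, Equiv.swap_apply_def]
          split_ifs with h1 h2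
          · rw [h1, hc]
          · rw [h2, hc]
          · rfl
        have := Submodule.smul_mem _ ((v j - v i)⁻¹) (vsub_mem_vectorSpan ℝ hm hself)
        convert this using 1
        have h0 : v j - v i ≠ 0 := sub_ne_zero.2 hv.symm
        rw [eq_inv_smul_iff₀ h0]
        funext k
        simp only [Pi.smul_apply, Pi.sub_apply, vsub_eq_sub, Function.comp, e, Pi.single_apply,
          smul_eq_mul, Equiv.swap_apply_def]
        by_cases h1 : k = i
        · subst h1; simp [hij]
        · by_cases h2 : k = j
          · subst h2; simp [h1]
          · simp [h1, h2]
      rintro _ ⟨⟨i, hi⟩, rfl⟩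
      obtain ⟨hN, hri⟩ := (Finset.mem_filter.1 hi).2
      simp only [b, SetLike.mem_coe]
      by_cases h : v i = v (r i)
      · obtain ⟨k, hk, hvk⟩ : ∃ k, c k = c i ∧ v k ≠ v i := by
          obtain ⟨x, y, hx, hy, hxy⟩ := hN
          by_cases hxi : v x = v i
          · exact ⟨y, hy, fun h => hxy (hxi.trans h.symm)⟩
          · exact ⟨x, hx, hxi⟩
        have h1 := hsw i k hk.symm hvk.symm
        have h2 := hsw k (r i) (hk.trans (hr1 i).symm) (h ▸ hvk)
        simpa using Submodule.add_mem _ h1 h2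
      · exact hsw _ _ (hr1 i).symm h
  unfold setDim
  rw [affineSpan_convexHull, direction_affineSpan, hspan, finrank_span_eq_card hli,
    Fintype.card_coe, Finset.card_eq_sum_card_fiberwise (f := c) (t := Finset.univ.image c)
      (fun i _ => by simp)]
  refine Finset.sum_congr rfl fun t ht => ?_
  obtain ⟨k, _, rfl⟩ := Finset.mem_image.1 ht
  split_ifs with hc
  · rw [zero_mul, Finset.card_eq_zero, Finset.filter_eq_empty_iff]
    intro i hi hik
    obtain ⟨x, y, hx, hy, hxy⟩ := (Finset.mem_filter.1 hi).2.1
    exact hxy (hc x (by simp [hx, hik]) y (by simp [hy, hik]))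
  · rw [one_mul, ← Finset.card_erase_of_mem (a := r k) (by simp [hr1])]
    congr 1
    have hN : N (c k) := by
      push Not at hc
      obtain ⟨x, hx, y, hy, hxy⟩ := hc
      exact ⟨x, y, by simpa using hx, by simpa using hy, hxy⟩
    ext i
    simp only [I, Finset.mem_filter, Finset.mem_univ, true_and, Finset.mem_erase]
    constructor
    · rintro ⟨⟨_, h⟩, hik⟩
      exact ⟨fun h' => h ((hr2 i k hik).trans h'.symm), hik⟩
    · rintro ⟨h, hik⟩
      exact ⟨⟨hik ▸ hN, fun h' => h (h'.symm.trans (hr2 i k hik))⟩, hik⟩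

/-- if the order of v agrees with that of c, the exposed face of
P_{n−1}(v) determined by c is conv{v∘μ : c∘μ = c}, and its dimension is
∑_t δ_{X_t}(v)·(|X_t|−1), summed over the distinct values t of c,
where X_t = {i : c_i = t}. -/
theorem face_permPoly_stabilizer_and_dim (n : ℕ) (v c : Fin n → ℝ)
    (hvc : ∀ i j : Fin n, c i < c j → v i ≤ v j) :
    ({x ∈ permPoly v | ∀ y ∈ permPoly v, ∑ i, c i * y i ≤ ∑ i, c i * x i}
      = convexHull ℝ {w : Fin n → ℝ | ∃ μ : Equiv.Perm (Fin n),
          c ∘ μ = c ∧ w = v ∘ μ}) ∧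
    setDim {x ∈ permPoly v | ∀ y ∈ permPoly v, ∑ i, c i * y i ≤ ∑ i, c i * x i}
      = ∑ t ∈ Finset.univ.image c,
          (if ∀ a ∈ Finset.univ.filter (fun i => c i = t),
              ∀ b ∈ Finset.univ.filter (fun i => c i = t), v a = v b then 0 else 1)
            * ((Finset.univ.filter (fun i => c i = t)).card - 1) := by
  have hf := aux_face v c (fun i j h => hvc i j h)
  exact ⟨hf, by rw [hf]; exact aux_dim v c⟩
end

section
/- Let v, a, c ∈ ℝ^n and suppose that for all i, j, a_i ≤ a_j implies c_i ≤ c_j. Let P = P_{n−1}(v), and for w ∈ ℝ^n let F(w) = {x ∈ P : ∀ y ∈ P, w·y ≤ w·x}, where w·x = ∑_{i=0}^{n−1} w_i x_i. Then F(a) ⊆ F(c). -/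
open Pointwise

theorem exists_common_max {n : ℕ} (v a : Fin n → ℝ) :
    ∃ w ∈ permPoly v, ∀ b : Fin n → ℝ, (∀ i j, a i ≤ a j → b i ≤ b j) →
      ∀ y ∈ permPoly v, ∑ i, b i * y i ≤ ∑ i, b i * w i := by
  set ρ : Equiv.Perm (Fin n) := (Tuple.sort a)⁻¹.trans (Tuple.sort v) with hρ
  have hmv : ∀ i j, a i < a j → v (ρ i) ≤ v (ρ j) := by
    intro i j hij
    have h1 : (Tuple.sort a)⁻¹ i ≤ (Tuple.sort a)⁻¹ j := by
      by_contra hcon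
      have := Tuple.monotone_sort a (le_of_lt (not_le.mp hcon))
      simp at this
      linarith
    exact Tuple.monotone_sort v h1
  refine ⟨v ∘ ρ, subset_convexHull ℝ _ ⟨ρ, rfl⟩, ?_⟩
  intro b hb y hy
  have hconv : Convex ℝ {y : Fin n → ℝ | ∑ i, b i * y i ≤ ∑ i, b i * (v ∘ ρ) i} := by
    apply convex_halfSpace_le
    constructor
    · intro x y
      simp [mul_add, Finset.sum_add_distrib]
    · intro t x
      simp only [Pi.smul_apply, smul_eq_mul, Finset.mul_sum]
      exact Finset.sum_congr rfl fun i _ => by ring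
  refine convexHull_min ?_ hconv hy
  rintro _ ⟨τ, rfl⟩
  have hmono : Monovary b (v ∘ ρ) := by
    apply Monovary.symm
    intro i j hij
    exact hmv i j (by
      by_contra hcon
      exact absurd (hb j i (not_lt.mp hcon)) (not_le.mpr hij))
  have := hmono.sum_mul_comp_perm_le_sum_mul (σ := τ.trans ρ⁻¹)
  simpa using this

theorem exists_small_eps {n : ℕ} (a c : Fin n → ℝ)
    (hac : ∀ i j : Fin n, a i ≤ a j → c i ≤ c j) :
    ∃ ε : ℝ, 0 < ε ∧ ∀ i j, a i ≤ a j → a i - ε * c i ≤ a j - ε * c j := by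
  have h : ∀ᶠ ε : ℝ in nhdsWithin 0 (Set.Ioi 0), ∀ i j, a i ≤ a j →
      a i - ε * c i ≤ a j - ε * c j := by
    rw [Filter.eventually_all]
    intro i
    rw [Filter.eventually_all]
    intro j
    rcases lt_trichotomy (a i) (a j) with hij | hij | hij
    · have hc : Continuous fun ε : ℝ => (a j - ε * c j) - (a i - ε * c i) := by fun_prop
      have := (hc.tendsto 0).eventually (lt_mem_nhds (a := 0) (by simpa using hij))
      filter_upwards [this.filter_mono nhdsWithin_le_nhds] with ε hε _
      linarith
    · have : c i = c j := le_antisymm (hac i j hij.le) (hac j i hij.ge)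
      exact Filter.Eventually.of_forall fun ε _ => by rw [hij, this]
    · exact Filter.Eventually.of_forall fun ε h => absurd h (not_le.mpr hij)
  obtain ⟨ε, h1, h2⟩ := (h.and self_mem_nhdsWithin).exists
  exact ⟨ε, h2, h1⟩

/-- if the order of a refines that of c
(a_i ≤ a_j ⇒ c_i ≤ c_j), then the exposed face of P_{n−1}(v) determined by a
is contained in the one determined by c. -/
theorem face_subset_of_order_refines (n : ℕ) (v a c : Fin n → ℝ)
    (hac : ∀ i j : Fin n, a i ≤ a j → c i ≤ c j) :
    {x ∈ permPoly v | ∀ y ∈ permPoly v, ∑ i, a i * y i ≤ ∑ i, a i * x i}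
      ⊆ {x ∈ permPoly v | ∀ y ∈ permPoly v, ∑ i, c i * y i ≤ ∑ i, c i * x i} := by
  rintro x ⟨hx, hmax⟩
  obtain ⟨w, hw, hwmax⟩ := exists_common_max v a
  obtain ⟨ε, hε, hb⟩ := exists_small_eps a c hac
  refine ⟨hx, fun y hy => (hwmax c hac y hy).trans ?_⟩
  have h1 := hwmax _ hb x hx
  have h2 := hmax w hw
  simp only [sub_mul, Finset.sum_sub_distrib, mul_assoc, ← Finset.mul_sum] at h1
  exact le_of_mul_le_mul_left (by linarith) hε
end

section
/- Let v, a ∈ ℝ^n be nondecreasing (v_0 ≤ ⋯ ≤ v_{n−1} and a_0 ≤ ⋯ ≤ a_{n−1}), and suppose a is v-reduced: for every two adjacent values s < t in the range of a (s, t values of a with no value of a strictly between them), v is not constant on {i : a_i = s or a_i = t}. Let c ∈ ℝ^n, let P = P_{n−1}(v), and for w ∈ ℝ^n let F(w) = {x ∈ P : ∀ y ∈ P, w·y ≤ w·x}, where w·x = ∑_{i=0}^{n−1} w_i x_i. Then F(a) ⊆ F(c) if and only if both of the following hold: (1) for all i, j, a_i < a_j implies c_i ≤ c_j; and (2) for every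 value t of a such that v is not constant on X_t = {i : a_i = t}, c is constant on X_t. -/
open Pointwise

lemma hull_le {n : ℕ} (v w : Fin n → ℝ) (M : ℝ)
    (h : ∀ σ : Equiv.Perm (Fin n), ∑ i, w i * v (σ i) ≤ M) :
    ∀ y ∈ permPoly v, ∑ i, w i * y i ≤ M := by
  have hl : IsLinearMap ℝ (fun y : Fin n → ℝ => ∑ i, w i * y i) := by
    constructor
    · intro x y
      simp [mul_add, Finset.sum_add_distrib]
    · intro r x
      simp only [Pi.smul_apply, smul_eq_mul, Finset.mul_sum]
      exact Finset.sum_congr rfl fun i _ => by ring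
  have hc := convex_halfSpace_le (𝕜 := ℝ) hl M
  have : permPoly v ⊆ {y : Fin n → ℝ | ∑ i, w i * y i ≤ M} := by
    apply convexHull_min _ hc
    rintro _ ⟨σ, rfl⟩
    exact h σ
  exact fun y hy => this hy

lemma mem_perm {n : ℕ} (v : Fin n → ℝ) (σ : Equiv.Perm (Fin n)) : v ∘ σ ∈ permPoly v :=
  subset_convexHull ℝ _ ⟨σ, rfl⟩

lemma le_of_max {n : ℕ} (c x : Fin n → ℝ) (i j : Fin n)
    (h : ∑ k, c k * x (Equiv.swap i j k) ≤ ∑ k, c k * x k) (hx : x i < x j) : c i ≤ c j := by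
  have hij : i ≠ j := by
    rintro rfl
    exact lt_irrefl _ hx
  have h1 : ∑ k, (c k * x (Equiv.swap i j k) - c k * x k) ≤ 0 := by
    rw [Finset.sum_sub_distrib]
    linarith
  rw [Fintype.sum_eq_add i j hij] at h1
  · simp only [Equiv.swap_apply_left, Equiv.swap_apply_right] at h1
    nlinarith
  · rintro k ⟨hi, hj⟩
    rw [Equiv.swap_apply_of_ne_of_ne hi hj, sub_self]

lemma exists_perm {n : ℕ} (a : Fin n → ℝ) (i j i0 j0 : Fin n) (hij : i ≠ j) (h0 : i0 ≠ j0)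
    (hi : a i = a i0) (hj : a j = a j0) :
    ∃ τ : Equiv.Perm (Fin n), (∀ k, a (τ k) = a k) ∧ τ i = i0 ∧ τ j = j0 := by
  have key : ∀ p q : Fin n, a p = a q → ∀ k, a (Equiv.swap p q k) = a k := by
    intro p q h k
    rw [Equiv.swap_apply_def]
    split_ifs with h1 h2
    · rw [h1, h]
    · rw [h2, h]
    · rfl
  refine ⟨Equiv.swap (Equiv.swap i i0 j) j0 * Equiv.swap i i0, ?_, ?_, ?_⟩
  · intro k
    rw [Equiv.Perm.mul_apply, key _ _ (by rw [key _ _ hi, hj]), key _ _ hi]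
  · rw [Equiv.Perm.mul_apply, Equiv.swap_apply_left]
    apply Equiv.swap_apply_of_ne_of_ne _ h0
    intro h
    apply hij
    apply (Equiv.swap i i0).injective
    rw [← h, Equiv.swap_apply_left]
  · rw [Equiv.Perm.mul_apply, Equiv.swap_apply_left]

lemma exists_level_perm {n : ℕ} (v a : Fin n → ℝ) (hv : Monotone v) (ha : Monotone a)
    (σ : Equiv.Perm (Fin n)) (hm : Monovary a (v ∘ σ)) :
    ∃ τ : Equiv.Perm (Fin n), (∀ k, a (τ k) = a k) ∧ ∀ k, v (σ (τ k)) = v k := by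
  let f : Fin n → ℝ ×ₗ ℝ := fun k => toLex (a k, v (σ k))
  have hs := Tuple.monotone_sort f
  have hle : ∀ p q, p ≤ q → a (Tuple.sort f p) < a (Tuple.sort f q) ∨
      a (Tuple.sort f p) = a (Tuple.sort f q) ∧
        v (σ (Tuple.sort f p)) ≤ v (σ (Tuple.sort f q)) := by
    intro p q h
    exact Prod.Lex.toLex_le_toLex.1 (hs h)
  have h1 : Monotone (a ∘ Tuple.sort f) := by
    intro p q h
    rcases hle p q h with h | h
    · exact h.le
    · exact h.1.le
  have h2 : Monotone (v ∘ (σ * Tuple.sort f)) := by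
    intro p q h
    rcases hle p q h with h | h
    · by_contra hc
      exact absurd (hm (not_le.1 hc)) (not_le.2 h)
    · exact h.2
  refine ⟨Tuple.sort f, fun k => ?_, fun k => ?_⟩
  · exact congrFun (Tuple.unique_monotone (f := a) (σ := Tuple.sort f) (τ := 1) h1 ha) k
  · exact congrFun (Tuple.unique_monotone (f := v) (σ := σ * Tuple.sort f) (τ := 1) h2 hv) k

lemma fwd {n : ℕ} (v a c : Fin n → ℝ) (hv : Monotone v) (ha : Monotone a)
    (hF : {x ∈ permPoly v | ∀ y ∈ permPoly v, ∑ i, a i * y i ≤ ∑ i, a i * x i}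
        ⊆ {x ∈ permPoly v | ∀ y ∈ permPoly v, ∑ i, c i * y i ≤ ∑ i, c i * x i})
    (i j i0 j0 : Fin n) (hij : i ≠ j) (hi : a i = a i0) (hj : a j = a j0)
    (h0 : v i0 < v j0) : c i ≤ c j := by
  obtain ⟨τ, hτ, rfl, rfl⟩ := exists_perm a i j i0 j0 hij (by rintro rfl; exact lt_irrefl _ h0) hi hj
  have hmem : v ∘ τ ∈ {x ∈ permPoly v | ∀ y ∈ permPoly v, ∑ i, a i * y i ≤ ∑ i, a i * x i} := by
    refine ⟨mem_perm v τ, hull_le v a _ fun σ => ?_⟩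
    have e : ∑ i, a i * (v ∘ τ) i = ∑ i, a i * v i := by
      rw [← Equiv.sum_comp τ (fun i => a i * v i)]
      simp [hτ]
    rw [e]
    exact (ha.monovary hv).sum_mul_comp_perm_le_sum_mul
  have h := (hF hmem).2 _ (mem_perm v (τ * Equiv.swap i j))
  exact le_of_max c (v ∘ τ) i j h h0

lemma bwd {n : ℕ} (v a c : Fin n → ℝ) (hv : Monotone v) (ha : Monotone a)
    (h1 : ∀ i j : Fin n, a i < a j → c i ≤ c j)
    (h2 : ∀ t : ℝ, (∃ i, a i = t) → (∃ i j : Fin n, a i = t ∧ a j = t ∧ v i ≠ v j) →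
            ∀ i j : Fin n, a i = t → a j = t → c i = c j) :
    {x ∈ permPoly v | ∀ y ∈ permPoly v, ∑ i, a i * y i ≤ ∑ i, a i * x i}
        ⊆ {x ∈ permPoly v | ∀ y ∈ permPoly v, ∑ i, c i * y i ≤ ∑ i, c i * x i} := by
  have hav : Monovary a v := ha.monovary hv
  have hcσ : ∀ σ : Equiv.Perm (Fin n), Monovary a (v ∘ σ) → Monovary c (v ∘ σ) := by
    intro σ hm i j hlt
    rcases (hm hlt).lt_or_eq with h | h
    · exact h1 _ _ h
    · obtain ⟨τ, hτ, hτv⟩ := exists_level_perm v a hv ha σ hm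
      refine (h2 (a j) ⟨j, rfl⟩ ⟨τ.symm i, τ.symm j, ?_, ?_, ?_⟩ i j h rfl).le
      · rw [← hτ, Equiv.apply_symm_apply, h]
      · rw [← hτ, Equiv.apply_symm_apply]
      · rw [← hτv (τ.symm i), ← hτv (τ.symm j), Equiv.apply_symm_apply, Equiv.apply_symm_apply]
        exact hlt.ne
  have hcv : Monovary c v := hcσ 1 hav
  have heq : ∀ σ : Equiv.Perm (Fin n), ∑ i, a i * v (σ i) = ∑ i, a i * v i →
      ∑ i, c i * v (σ i) = ∑ i, c i * v i := by
    intro σ h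
    exact hcv.sum_mul_comp_perm_eq_sum_mul_iff.2
      (hcσ σ (hav.sum_mul_comp_perm_eq_sum_mul_iff.1 h))
  obtain ⟨σ₀, hσ₀⟩ := Finite.exists_max (fun σ : Equiv.Perm (Fin n) =>
    (∑ i, c i * v i - ∑ i, c i * v (σ i)) / (∑ i, a i * v i - ∑ i, a i * v (σ i)))
  set K := (∑ i, c i * v i - ∑ i, c i * v (σ₀ i)) / (∑ i, a i * v i - ∑ i, a i * v (σ₀ i))
  have hexp : ∀ x : Fin n → ℝ, ∑ i, (K * a i - c i) * x i
      = K * ∑ i, a i * x i - ∑ i, c i * x i := by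
    intro x
    rw [Finset.mul_sum, ← Finset.sum_sub_distrib]
    exact Finset.sum_congr rfl fun i _ => by ring
  have hK := hull_le v (fun i => K * a i - c i) (K * ∑ i, a i * v i - ∑ i, c i * v i) (by
    intro σ
    have := hexp (fun i => v (σ i))
    rw [this]
    have hle : ∑ i, a i * v (σ i) ≤ ∑ i, a i * v i := hav.sum_mul_comp_perm_le_sum_mul
    rcases hle.lt_or_eq with h | h
    · have := (div_le_iff₀ (sub_pos.2 h)).1 (hσ₀ σ)
      linarith
    · rw [h, heq σ h])
  rintro x ⟨hx, hxa⟩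
  refine ⟨hx, hull_le v c _ fun σ => ?_⟩
  have e1 : ∑ i, c i * v (σ i) ≤ ∑ i, c i * v i := hcv.sum_mul_comp_perm_le_sum_mul
  have e2 := hK x hx
  simp only [hexp] at e2
  have e3 : ∑ i, a i * v i ≤ ∑ i, a i * x i := hxa _ (mem_perm v 1)
  have e4 : ∑ i, a i * x i ≤ ∑ i, a i * v i :=
    hull_le v a _ (fun σ => hav.sum_mul_comp_perm_le_sum_mul) x hx
  rw [le_antisymm e4 e3] at e2
  linarith

/-- for nondecreasing v and nondecreasing v-reduced a, the face
of P_{n−1}(v) determined by a is contained in the one determined by c iff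
(1) a_i < a_j ⇒ c_i ≤ c_j, and (2) c is constant on each level set X_t of a on
which v is not constant. -/
theorem face_subset_iff_of_reduced (n : ℕ) (v a c : Fin n → ℝ)
    (hv : Monotone v) (ha : Monotone a)
    (hred : ∀ s t : ℝ, (∃ i, a i = s) → (∃ j, a j = t) → s < t →
      (∀ l : Fin n, ¬(s < a l ∧ a l < t)) →
      ∃ i j : Fin n, (a i = s ∨ a i = t) ∧ (a j = s ∨ a j = t) ∧ v i ≠ v j) :
    ({x ∈ permPoly v | ∀ y ∈ permPoly v, ∑ i, a i * y i ≤ ∑ i, a i * x i}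
        ⊆ {x ∈ permPoly v | ∀ y ∈ permPoly v, ∑ i, c i * y i ≤ ∑ i, c i * x i})
      ↔ ((∀ i j : Fin n, a i < a j → c i ≤ c j) ∧
          (∀ t : ℝ, (∃ i, a i = t) →
            (∃ i j : Fin n, a i = t ∧ a j = t ∧ v i ≠ v j) →
            ∀ i j : Fin n, a i = t → a j = t → c i = c j)) := by
  constructor
  · intro hF
    have key := fwd v a c hv ha hF
    refine ⟨?_, ?_⟩
    · have main : ∀ m : ℕ, ∀ i j : Fin n,
          (Finset.univ.filter fun l => a i < a l ∧ a l < a j).card = m →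
          a i < a j → c i ≤ c j := by
        intro m
        induction m using Nat.strong_induction_on with
        | _ m ih =>
          intro i j hm hlt
          by_cases hl : ∃ l, a i < a l ∧ a l < a j
          · obtain ⟨l, hl1, hl2⟩ := hl
            have c1 : c i ≤ c l := by
              refine ih _ ?_ i l rfl hl1
              rw [← hm]
              apply Finset.card_lt_card
              rw [Finset.ssubset_iff_of_subset]
              · exact ⟨l, by simp [hl1, hl2], by simp⟩
              · intro k
                simp only [Finset.mem_filter, Finset.mem_univ, true_and]
                exact fun h => ⟨h.1, h.2.trans hl2⟩
            have c2 : c l ≤ c j := by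
              refine ih _ ?_ l j rfl hl2
              rw [← hm]
              apply Finset.card_lt_card
              rw [Finset.ssubset_iff_of_subset]
              · exact ⟨l, by simp [hl1, hl2], by simp⟩
              · intro k
                simp only [Finset.mem_filter, Finset.mem_univ, true_and]
                exact fun h => ⟨hl1.trans h.1, h.2⟩
            exact c1.trans c2
          · obtain ⟨p, q, hp, hq, hne⟩ := hred (a i) (a j) ⟨i, rfl⟩ ⟨j, rfl⟩ hlt
              (fun l h => hl ⟨l, h⟩)
            have hvle : ∀ x y, a x < a y → v x ≤ v y := by
              intro x y h
              apply hv
              by_contra hc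
              exact absurd (ha (not_le.1 hc).le) (not_le.2 h)
            have hij : i ≠ j := by
              rintro rfl
              exact lt_irrefl _ hlt
            have gen : ∀ p q, (a p = a i ∨ a p = a j) → (a q = a i ∨ a q = a j) →
                v p < v q → c i ≤ c j := by
              intro p q hp hq h
              rcases hp with hp | hp <;> rcases hq with hq | hq
              · exact key i j p j hij hp.symm rfl
                  (h.trans_le (hvle _ _ (by rw [hq]; exact hlt)))
              · exact key i j p q hij hp.symm hq.symm h
              · exact absurd (hvle q p (by rw [hp, hq]; exact hlt)) (not_le.2 h)
              · exact key i j i q hij rfl hq.symm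
                  ((hvle i p (by rw [hp]; exact hlt)).trans_lt h)
            rcases lt_or_gt_of_ne hne with h | h
            · exact gen p q hp hq h
            · exact gen q p hq hp h
      exact fun i j h => main _ i j rfl h
    · rintro t - ⟨p, q, hp, hq, hne⟩ i j hi hj
      by_cases hij : i = j
      · rw [hij]
      rcases lt_or_gt_of_ne hne with h | h
      · exact le_antisymm (key i j p q hij (by rw [hi, hp]) (by rw [hj, hq]) h)
          (key j i p q (Ne.symm hij) (by rw [hj, hp]) (by rw [hi, hq]) h)
      · exact le_antisymm (key i j q p hij (by rw [hi, hq]) (by rw [hj, hp]) h)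
          (key j i q p (Ne.symm hij) (by rw [hj, hq]) (by rw [hi, hp]) h)
  · rintro ⟨h1, h2⟩
    exact bwd v a c hv ha h1 h2
end
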